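/- arXiv:2103.00425 — 2 statements merged into one kernel-verified Lean document; each statement's English description precedes it below -/
import Mathlib

section
/- Let G be a finite Frobenius group with Frobenius kernel K and Frobenius complement H. Then G has perfect order classes if, and only if, the following three conditions hold: (a) H has perfect order classes; (b) K is a homocyclic p-group for some odd prime p, i.e. K is isomorphic to a direct product of r copies of a cyclic group of order p^k for some positive integers k and r; and (c) the order of H equals p^r - 1, where r is the rank of K. -/
/-- The number of elements of order `n` in the group `G`. -/
noncomputable def orderCount (G : Type*) [Group G] (n : ℕ) : ℕ :=
  Nat.card {g : G // orderOf g = n}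

/-- A group has *perfect order classes* if, for every positive integer `n`, the number of
elements of order `n` is either zero or a divisor of the order of the group. -/
def PerfectOrderClasses (G : Type*) [Group G] : Prop :=
  ∀ n : ℕ, 0 < n → orderCount G n = 0 ∨ orderCount G n ∣ Nat.card G

/-- `G` is a Frobenius group with Frobenius kernel `K` and Frobenius complement `H`:
`K` is a nontrivial proper normal subgroup, `H` a subgroup with `K ⊓ H = ⊥` and `KH = G`,
and the conjugation action of `H` on `K` is fixed-point-free. -/
def IsFrobeniusWith {G : Type*} [Group G] (K H : Subgroup G) : Prop :=
  K ≠ ⊥ ∧ K ≠ ⊤ ∧ K.Normal ∧ K ⊓ H = ⊥ ∧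
    (∀ g : G, ∃ k ∈ K, ∃ h ∈ H, g = k * h) ∧
    ∀ h ∈ H, h ≠ 1 → ∀ k ∈ K, k ≠ 1 → h * k * h⁻¹ ≠ k

/-!
If `1 ≠ h ∈ H`, then `[·, h]` is injective on `K`, hence surjective, so every element of `K h` is
conjugate to `h`. Writing `N` for `orderCount`, this gives `N_G(n) = N_K(n) + |K| N_H(n)` for
`n ≠ 1`, where at most one summand is nonzero because `|K|` and `|H|` are coprime. So `G` has
perfect order classes iff `H` does and every nonzero `N_K(n)` divides `|K| |H|`.

In that case `H`, being nontrivial, has even order because elements of order greater than `2` pair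
off with their inverses; an involution of `H` inverts `K`, which is therefore abelian. The free
action of `H` on `K \ {1}` makes `|H|` divide `N_K(n)` for `n ≠ 1`. Two primes `p ≠ q` dividing
`|K|` would make `|H|²` divide `N_K(pq) = N_K(p) N_K(q)`, which divides `|K| |H|`; so `K ≅ ∏ᵢ
ℤ/p^(mᵢ)` for one prime `p`. There `N_K(p^(j+1)) = p^s (p^r - 1)` with `s = ∑ᵢ min(mᵢ, j)` and `r`
the number of `i` with `mᵢ > j`, which forces `|H| = p^r - 1`. Hence `r` does not depend on `j <
max mᵢ`, that is, all `mᵢ` are equal. Conversely, if all `mᵢ` equal `k`, then `s = r j ≤ r k` for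
`j < k`, so `N_K(p^(j+1))` divides `|K| (p^r - 1)`.
-/

section Arithmetic

theorem gcd_pow_pow_eq_pow_min (p a b : ℕ) : (p ^ a).gcd (p ^ b) = p ^ min a b := by
  rcases le_total a b with h | h
  · rw [Nat.gcd_eq_left (pow_dvd_pow p h), min_eq_left h]
  · rw [Nat.gcd_eq_right (pow_dvd_pow p h), min_eq_right h]

theorem eq_of_dvd_pow_mul_of_pow_mul_dvd {p h q s t : ℕ} (hh : p.Coprime h) (hq : p.Coprime q)
    (hdvd : h ∣ p ^ s * q) (hdvd' : p ^ s * q ∣ p ^ t * h) : q = h :=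
  Nat.dvd_antisymm
    ((hq.symm.pow_right t).dvd_of_dvd_mul_left ((dvd_mul_left q _).trans hdvd'))
    ((hh.symm.pow_right s).dvd_of_dvd_mul_left hdvd)

theorem coprime_pow_sub_one {p r : ℕ} (hp : p ≠ 0) (hr : r ≠ 0) : p.Coprime (p ^ r - 1) := by
  have : (p ^ r).Coprime (p ^ r - 1) :=
    (Nat.coprime_self_sub_right (Nat.one_le_pow _ _ (by omega))).mpr (Nat.coprime_one_right _)
  exact this.coprime_dvd_left (dvd_pow_self p hr)

theorem odd_of_even_pow_sub_one {p r : ℕ} (hp : 0 < p) (hr : r ≠ 0) (heven : Even (p ^ r - 1)) :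
    Odd p := by
  rw [← Nat.odd_pow_iff hr, ← Nat.sub_add_cancel (Nat.one_le_pow r p hp)]
  exact heven.add_one

theorem eq_of_forall_card_filter_lt_eq {ι : Type*} [Fintype ι] {m : ι → ℕ} {r : ℕ}
    (hpos : ∀ i, 0 < m i) (hr : ∀ i, ∀ j < m i, Finset.card {i' | j < m i'} = r) (i i' : ι) :
    m i = m i' := by
  suffices hle : ∀ i i', m i ≤ m i' from le_antisymm (hle i i') (hle i' i)
  intro i i'
  have hcard : Finset.card {i' | m i - 1 < m i'} = Fintype.card ι := by
    rw [hr i _ (Nat.sub_one_lt (hpos i).ne'), ← hr i 0 (hpos i)]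
    simp [hpos, Finset.card_univ]
  have := Finset.filter_eq_self.mp ((Finset.card_eq_iff_eq_univ _).mp hcard) i' (Finset.mem_univ i')
  omega

end Arithmetic

section OrderCount

variable {A B : Type*} [Group A] [Group B]

theorem orderCount_eq_ncard (A : Type*) [Group A] (n : ℕ) :
    orderCount A n = {a : A | orderOf a = n}.ncard :=
  Nat.card_coe_set_eq _

theorem orderCount_congr (e : A ≃* B) (n : ℕ) : orderCount A n = orderCount B n :=
  Nat.card_congr (e.toEquiv.subtypeEquiv fun a ↦ by simp)

theorem orderCount_one (A : Type*) [Group A] : orderCount A 1 = 1 := by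
  simp [orderCount, orderOf_eq_one_iff]

theorem orderCount_ne_zero_iff [Finite A] {n : ℕ} :
    orderCount A n ≠ 0 ↔ ∃ a : A, orderOf a = n := by
  rw [orderCount, Nat.card_ne_zero, nonempty_subtype, and_iff_left]
  infer_instance

theorem perfectOrderClasses_iff_forall_one_lt :
    PerfectOrderClasses A ↔
      ∀ n, 1 < n → orderCount A n = 0 ∨ orderCount A n ∣ Nat.card A := by
  refine ⟨fun hA n hn ↦ hA n (by omega), fun hA n hn ↦ ?_⟩
  obtain rfl | hn : n = 1 ∨ 1 < n := by omega
  · rw [orderCount_one]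
    exact .inr (one_dvd _)
  · exact hA n hn

theorem even_orderCount [Finite A] {n : ℕ} (hn : 2 < n) : Even (orderCount A n) := by
  classical
  have := Fintype.ofFinite A
  have inv_ne (a : A) (ha : orderOf a = n) : a⁻¹ ≠ a := by
    intro h
    have : a ^ 2 = 1 := by rw [sq, ← inv_eq_iff_mul_eq_one, h]
    have := Nat.le_of_dvd two_pos (orderOf_dvd_of_pow_eq_one this)
    omega
  rw [orderCount, Nat.card_eq_fintype_card, Fintype.card_subtype, ← ZMod.natCast_eq_zero_iff_even,
    Finset.cast_card]
  exact Finset.sum_involution (fun a _ ↦ a⁻¹) (fun _ _ ↦ by decide)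
    (fun a ha _ ↦ inv_ne a (by simpa using ha)) (fun a ha ↦ by simpa using ha)
    (fun a _ ↦ inv_inv a)

theorem PerfectOrderClasses.even_card [Finite A] [Nontrivial A] (hA : PerfectOrderClasses A) :
    Even (Nat.card A) := by
  obtain ⟨a, ha⟩ := exists_ne (1 : A)
  have h0 := orderOf_pos a
  have h1 : orderOf a ≠ 1 := mt orderOf_eq_one_iff.mp ha
  obtain h2 | h2 : orderOf a = 2 ∨ 2 < orderOf a := by omega
  · exact even_iff_two_dvd.mpr (h2 ▸ orderOf_dvd_natCard a)
  · exact (even_orderCount h2).trans_dvd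
      ((hA _ h0).resolve_left (orderCount_ne_zero_iff.mpr ⟨a, rfl⟩))

theorem orderCount_mul_of_coprime {A : Type*} [CommGroup A] [Finite A] {m n : ℕ}
    (hm : m ≠ 0) (hn : n ≠ 0) (hmn : m.Coprime n) :
    orderCount A (m * n) = orderCount A m * orderCount A n := by
  simp only [orderCount, ← Nat.card_prod]
  have orderOf_pow_right (z : {z : A // orderOf z = m * n}) : orderOf (z.1 ^ n) = m := by
    rw [orderOf_pow_of_dvd hn (by simp [z.2]), z.2, Nat.mul_div_cancel _ (by omega)]
  have orderOf_pow_left (z : {z : A // orderOf z = m * n}) : orderOf (z.1 ^ m) = n := by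
    rw [orderOf_pow_of_dvd hm (by simp [z.2]), z.2, Nat.mul_div_cancel_left _ (by omega)]
  have orderOf_mul (x : {x : A // orderOf x = m}) (y : {y : A // orderOf y = n}) :
      orderOf (x.1 * y.1) = m * n := by
    rw [(Commute.all x.1 y.1).orderOf_mul_eq_mul_orderOf_of_coprime (by rwa [x.2, y.2]), x.2, y.2]
  apply le_antisymm
  · refine Nat.card_le_card_of_injective
      (fun z ↦ (⟨z.1 ^ n, orderOf_pow_right z⟩, ⟨z.1 ^ m, orderOf_pow_left z⟩)) fun z w hzw ↦ ?_
    simp only [Prod.mk.injEq, Subtype.mk.injEq] at hzw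
    refine Subtype.ext (div_eq_one.mp ((pow_eq_one_iff_of_coprime hmn).mp ⟨?_, ?_⟩))
    · rw [div_pow, hzw.2, div_self']
    · rw [div_pow, hzw.1, div_self']
  · refine Nat.card_le_card_of_injective (fun x ↦ ⟨x.1 * x.2, orderOf_mul x.1 x.2⟩) ?_
    rintro ⟨⟨x, hx⟩, ⟨y, hy⟩⟩ ⟨⟨x', hx'⟩, ⟨y', hy'⟩⟩ hxy
    replace hxy : x / x' = y' / y := by
      rw [div_eq_div_iff_mul_eq_mul, mul_comm y']
      exact congrArg Subtype.val hxy
    have hx1 : x / x' = 1 := by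
      refine (pow_eq_one_iff_of_coprime hmn).mp ⟨?_, ?_⟩
      · rw [div_pow, ← hx, pow_orderOf_eq_one, hx, ← hx', pow_orderOf_eq_one, div_self']
      · rw [hxy, div_pow, ← hy, pow_orderOf_eq_one, hy, ← hy', pow_orderOf_eq_one, div_self']
    simp [div_eq_one.mp hx1, div_eq_one.mp (hxy ▸ hx1)]

theorem ncard_pow_eq_one_add_orderCount [Finite A] {p : ℕ} (hp : p.Prime) (j : ℕ) :
    {a : A | a ^ p ^ j = 1}.ncard + orderCount A (p ^ (j + 1)) =
      {a : A | a ^ p ^ (j + 1) = 1}.ncard := by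
  have := Fact.mk hp
  have hdisj : Disjoint {a : A | a ^ p ^ j = 1} {a : A | orderOf a = p ^ (j + 1)} := by
    refine Set.disjoint_left.mpr fun a ha hord ↦ ?_
    have := orderOf_dvd_of_pow_eq_one ha
    rw [hord, Nat.pow_dvd_pow_iff_le_right hp.one_lt] at this
    omega
  rw [orderCount_eq_ncard, ← Set.ncard_union_eq hdisj]
  congr 1
  ext a
  constructor
  · rintro (ha | ha)
    · change a ^ p ^ (j + 1) = 1
      rw [pow_succ, pow_mul, ha, one_pow]
    · exact ha ▸ pow_orderOf_eq_one a
  · exact fun ha ↦ or_iff_not_imp_left.mpr fun ha' ↦ orderOf_eq_prime_pow ha' ha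

theorem ncard_pow_eq_one_pi_zmod {ι : Type*} [Fintype ι] (n : ι → ℕ) [∀ i, NeZero (n i)] (m : ℕ) :
    {f : ∀ i, Multiplicative (ZMod (n i)) | f ^ m = 1}.ncard = ∏ i, (n i).gcd m := by
  have hfactor (i : ι) : Nat.card {x : Multiplicative (ZMod (n i)) // x ^ m = 1} = (n i).gcd m := by
    simpa using IsCyclic.card_powMonoidHom_ker (Multiplicative (ZMod (n i))) m
  simp only [← hfactor, ← Nat.card_pi, ← Nat.card_coe_set_eq]
  exact Nat.card_congr ((Equiv.subtypeEquivRight fun f ↦ by simp [funext_iff]).trans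
    Equiv.subtypePiEquivPi)

theorem orderCount_pi_zmod_prime_pow {ι : Type*} [Fintype ι] {p : ℕ} (hp : p.Prime) (m : ι → ℕ)
    (j : ℕ) :
    orderCount (∀ i, Multiplicative (ZMod (p ^ m i))) (p ^ (j + 1)) =
      p ^ (∑ i, min (m i) j) * (p ^ Finset.card {i | j < m i} - 1) := by
  have (i : ι) : NeZero (p ^ m i) := ⟨pow_ne_zero _ hp.ne_zero⟩
  have hncard (j : ℕ) : {f : ∀ i, Multiplicative (ZMod (p ^ m i)) | f ^ p ^ j = 1}.ncard =
      p ^ ∑ i, min (m i) j := by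
    simp_rw [ncard_pow_eq_one_pi_zmod, gcd_pow_pow_eq_pow_min, Finset.prod_pow_eq_pow_sum]
  have hmin : ∑ i, min (m i) (j + 1) = ∑ i, min (m i) j + Finset.card {i | j < m i} := by
    rw [Finset.card_filter, ← Finset.sum_add_distrib]
    refine Finset.sum_congr rfl fun i _ ↦ ?_
    split_ifs <;> omega
  have hadd := ncard_pow_eq_one_add_orderCount (A := ∀ i, Multiplicative (ZMod (p ^ m i))) hp j
  rw [hncard, hncard, hmin, pow_add _ (∑ i, min (m i) j)] at hadd
  rw [Nat.mul_sub_one, ← hadd, Nat.add_sub_cancel_left]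

end OrderCount

section HomocyclicRecognition

variable {A : Type*}

theorem isPrimePow_card_of_orderCount_dvd [CommGroup A] [Finite A] [Nontrivial A] {h : ℕ}
    (hh : 1 < h) (hcop : (Nat.card A).Coprime h)
    (hmul : ∀ n, 1 < n → h ∣ orderCount A n)
    (hdvd : ∀ n, 1 < n → orderCount A n = 0 ∨ orderCount A n ∣ Nat.card A * h) :
    IsPrimePow (Nat.card A) := by
  have hne {q : ℕ} (hq : q.Prime) (hqA : q ∣ Nat.card A) : orderCount A q ≠ 0 :=
    have := Fact.mk hq
    orderCount_ne_zero_iff.mpr (exists_prime_orderOf_dvd_card' q hqA)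
  obtain ⟨p, hp, hpA⟩ := Nat.exists_prime_and_dvd (Finite.one_lt_card (α := A)).ne'
  refine isPrimePow_iff_unique_prime_dvd.mpr ⟨p, ⟨hp, hpA⟩, fun q ⟨hq, hqA⟩ ↦ ?_⟩
  by_contra hqp
  have hcount : orderCount A (q * p) = orderCount A q * orderCount A p :=
    orderCount_mul_of_coprime hq.ne_zero hp.ne_zero ((Nat.coprime_primes hq hp).mpr hqp)
  have hqp_dvd : orderCount A (q * p) ∣ Nat.card A * h :=
    (hdvd _ (Nat.one_lt_mul_iff.mpr ⟨hq.pos, hp.pos, .inl hq.one_lt⟩)).resolve_left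
      (hcount ▸ mul_ne_zero (hne hq hqA) (hne hp hpA))
  have hsq : h * h ∣ Nat.card A * h :=
    (mul_dvd_mul (hmul q hq.one_lt) (hmul p hp.one_lt)).trans (hcount ▸ hqp_dvd)
  exact hh.ne' (hcop.symm.eq_one_of_dvd (Nat.dvd_of_mul_dvd_mul_right (by omega) hsq))

theorem exists_mulEquiv_pi_zmod_prime_pow [CommGroup A] [Finite A] {p : ℕ} (hp : p.Prime)
    (hA : IsPGroup p A) :
    ∃ (ι : Type) (_ : Fintype ι) (m : ι → ℕ),
      (∀ i, 0 < m i) ∧ Nonempty (A ≃* ∀ i, Multiplicative (ZMod (p ^ m i))) := by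
  have := Fact.mk hp
  obtain ⟨t, ht⟩ := IsPGroup.iff_card.mp hA
  obtain ⟨ι, _, n, hn, ⟨e⟩⟩ := CommGroup.equiv_prod_multiplicative_zmod_of_finite A
  have hcard : ∏ i, n i = p ^ t := by
    rw [← ht, Nat.card_congr e.toEquiv, Nat.card_pi]
    exact Finset.prod_congr rfl fun i _ ↦ (Nat.card_zmod (n i)).symm
  choose m _ hm using fun i ↦ (Nat.dvd_prime_pow hp).mp
    (hcard ▸ Finset.dvd_prod_of_mem n (Finset.mem_univ i))
  obtain rfl : n = fun i ↦ p ^ m i := funext hm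
  exact ⟨ι, inferInstance, m, fun i ↦ Nat.pos_of_ne_zero fun h0 ↦ by simpa [h0] using hn i, ⟨e⟩⟩

theorem pow_card_filter_lt_eq_of_orderCount_dvd {ι : Type*} [Fintype ι] {p h t j : ℕ}
    (hp : p.Prime) (hph : p.Coprime h) {m : ι → ℕ} (hj : ∃ i, j < m i)
    (hmul : h ∣ orderCount (∀ i, Multiplicative (ZMod (p ^ m i))) (p ^ (j + 1)))
    (hdvd : orderCount (∀ i, Multiplicative (ZMod (p ^ m i))) (p ^ (j + 1)) = 0 ∨
      orderCount (∀ i, Multiplicative (ZMod (p ^ m i))) (p ^ (j + 1)) ∣ p ^ t * h) :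
    p ^ Finset.card {i | j < m i} = h + 1 := by
  have hr : Finset.card {i | j < m i} ≠ 0 :=
    hj.elim fun i hi ↦ Finset.card_ne_zero_of_mem (Finset.mem_filter.mpr ⟨Finset.mem_univ i, hi⟩)
  have hlt : 1 < p ^ Finset.card {i | j < m i} := Nat.one_lt_pow hr hp.one_lt
  rw [orderCount_pi_zmod_prime_pow hp] at hmul hdvd
  have := eq_of_dvd_pow_mul_of_pow_mul_dvd hph (coprime_pow_sub_one hp.ne_zero hr) hmul
    (hdvd.resolve_left (mul_ne_zero (pow_ne_zero _ hp.ne_zero) (by omega)))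
  omega

theorem exists_mulEquiv_pi_zmod_of_orderCount_dvd [CommGroup A] [Finite A] [Nontrivial A] {h : ℕ}
    (hh : 1 < h) (hcop : (Nat.card A).Coprime h)
    (hmul : ∀ n, 1 < n → h ∣ orderCount A n)
    (hdvd : ∀ n, 1 < n → orderCount A n = 0 ∨ orderCount A n ∣ Nat.card A * h) :
    ∃ p k r : ℕ, p.Prime ∧ 0 < k ∧ 0 < r ∧
      Nonempty (A ≃* (Fin r → Multiplicative (ZMod (p ^ k)))) ∧ h = p ^ r - 1 := by
  obtain ⟨p, t, hp, ht, hcard⟩ :=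
    (isPrimePow_nat_iff _).mp (isPrimePow_card_of_orderCount_dvd hh hcop hmul hdvd)
  obtain ⟨ι, _, m, hpos, ⟨e⟩⟩ := exists_mulEquiv_pi_zmod_prime_pow hp (.of_card hcard.symm)
  have hph : p.Coprime h := hcop.coprime_dvd_left (hcard ▸ dvd_pow_self p ht.ne')
  have hrank {j : ℕ} (hj : ∃ i, j < m i) : p ^ Finset.card {i | j < m i} = h + 1 := by
    have hn : 1 < p ^ (j + 1) := Nat.one_lt_pow j.succ_ne_zero hp.one_lt
    refine pow_card_filter_lt_eq_of_orderCount_dvd hp hph hj ?_ (t := t) ?_ <;>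
      rw [← orderCount_congr e]
    exacts [hmul _ hn, hcard ▸ hdvd _ hn]
  have hι : Nonempty ι := by
    by_contra! hι
    exact not_subsingleton A e.toEquiv.subsingleton
  obtain ⟨i₀⟩ := hι
  have hcardι : p ^ Fintype.card ι = h + 1 := by
    rw [← hrank ⟨i₀, hpos i₀⟩]
    simp [hpos, Finset.card_univ]
  have hconst : m = fun _ ↦ m i₀ := by
    funext i
    refine eq_of_forall_card_filter_lt_eq hpos (r := Fintype.card ι) (fun i j hj ↦ ?_) i i₀
    exact Nat.pow_right_injective hp.two_le ((hrank ⟨i, hj⟩).trans hcardι.symm)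
  rw [hconst] at e
  exact ⟨p, m i₀, Fintype.card ι, hp, hpos i₀, Fintype.card_pos_iff.mpr ⟨i₀⟩,
    ⟨e.trans (.arrowCongr (Fintype.equivFin ι) (.refl _))⟩, by omega⟩

theorem orderCount_dvd_of_mulEquiv_pi_zmod [Group A] {ι : Type*} [Fintype ι] {p k : ℕ}
    (hp : p.Prime) (e : A ≃* (ι → Multiplicative (ZMod (p ^ k)))) {n : ℕ} (hn : 1 < n) :
    orderCount A n = 0 ∨ orderCount A n ∣ Nat.card A * (p ^ Fintype.card ι - 1) := by
  have := Fact.mk hp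
  have : NeZero (p ^ k) := ⟨pow_ne_zero _ hp.ne_zero⟩
  have hcard : Nat.card (ι → Multiplicative (ZMod (p ^ k))) = p ^ (Fintype.card ι * k) := by
    simp [Nat.card_pi, ← pow_mul, mul_comm]
  rw [Nat.card_congr e.toEquiv, orderCount_congr e, hcard, or_iff_not_imp_left]
  intro h0
  obtain ⟨f, rfl⟩ := orderCount_ne_zero_iff.mp h0
  obtain ⟨j, hj⟩ := IsPGroup.iff_orderOf.mp (IsPGroup.of_card hcard) f
  obtain ⟨j, rfl⟩ : ∃ i, j = i + 1 := Nat.exists_eq_succ_of_ne_zero (by rintro rfl; simp [hj] at hn)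
  rw [hj, orderCount_pi_zmod_prime_pow hp fun _ ↦ k] at h0 ⊢
  have hjk : j < k := by
    by_contra hjk
    simp [hjk] at h0
  simp only [hjk, Finset.filter_true, Finset.card_univ, Finset.sum_const, smul_eq_mul]
  exact Nat.mul_dvd_mul_right (pow_dvd_pow p (Nat.mul_le_mul_left _ (min_le_left _ _))) _

end HomocyclicRecognition

theorem card_dvd_card_of_stabilizer_eq_bot {Q X : Type*} [Group Q] [MulAction Q X]
    (hstab : ∀ x : X, MulAction.stabilizer Q x = ⊥) : Nat.card Q ∣ Nat.card X := by
  rw [Nat.card_congr (MulAction.selfEquivOrbitsQuotientProd hstab), Nat.card_prod]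
  exact dvd_mul_left _ _

theorem card_dvd_ncard_of_fixedPointFree {Q A : Type*} [Group Q] [Group A] {φ : Q →* MulAut A}
    (hφ : ∀ q ≠ 1, MonoidHom.FixedPointFree (φ q)) {S : Set A}
    (hS : ∀ q, ∀ a ∈ S, φ q a ∈ S) (h1 : 1 ∉ S) : Nat.card Q ∣ S.ncard := by
  let : MulAction Q A := MulAction.compHom A φ
  let S' : SubMulAction Q A := ⟨S, fun q a ha ↦ hS q a ha⟩
  have hstab (a : S') : MulAction.stabilizer Q a = ⊥ := by
    refine eq_bot_iff.mpr fun q hq ↦ ?_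
    by_contra hq1
    have hfix : φ q a = a := congrArg Subtype.val (MulAction.mem_stabilizer_iff.mp hq)
    exact h1 (hφ q hq1 a hfix ▸ a.2)
  have hcard : Nat.card S' = S.ncard := Nat.card_coe_set_eq S
  exact hcard ▸ card_dvd_card_of_stabilizer_eq_bot hstab

namespace IsFrobeniusWith

variable {G : Type*} [Group G] {K H : Subgroup G}

theorem normal (hF : IsFrobeniusWith K H) : K.Normal := hF.2.2.1

theorem isComplement' (hF : IsFrobeniusWith K H) : K.IsComplement' H := by
  obtain ⟨-, -, -, hinf, hmul, -⟩ := hF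
  refine Subgroup.isComplement'_of_disjoint_and_mul_eq_univ (disjoint_iff.mpr hinf)
    (Set.eq_univ_of_forall fun g ↦ ?_)
  obtain ⟨k, hk, h, hh, rfl⟩ := hmul g
  exact Set.mul_mem_mul hk hh

theorem nontrivial_kernel (hF : IsFrobeniusWith K H) : Nontrivial K :=
  K.nontrivial_iff_ne_bot.mpr hF.1

theorem nontrivial_complement (hF : IsFrobeniusWith K H) : Nontrivial H := by
  refine H.nontrivial_iff_ne_bot.mpr fun hbot ↦ hF.2.1 ?_
  exact Subgroup.isComplement'_bot_right.mp (hbot ▸ hF.isComplement')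

/-- The action of the complement on the kernel by conjugation. -/
def conjHom (hF : IsFrobeniusWith K H) : H →* MulAut K :=
  have := hF.normal
  MulAut.conjNormal.comp H.subtype

theorem coe_conjHom_apply (hF : IsFrobeniusWith K H) (h : H) (k : K) :
    (hF.conjHom h k : G) = h * k * (h : G)⁻¹ := rfl

theorem fixedPointFree_conjHom (hF : IsFrobeniusWith K H) {h : H} (hh : h ≠ 1) :
    MonoidHom.FixedPointFree (hF.conjHom h) := by
  intro k hk
  by_contra hk1
  exact hF.2.2.2.2.2 h h.2 (by simpa using hh) k k.2 (by simpa using hk1) (congrArg Subtype.val hk)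

theorem card_complement_dvd_orderCount (hF : IsFrobeniusWith K H) {n : ℕ} (hn : n ≠ 1) :
    Nat.card H ∣ orderCount K n := by
  rw [orderCount_eq_ncard]
  refine card_dvd_ncard_of_fixedPointFree (fun h ↦ hF.fixedPointFree_conjHom)
    (fun h k hk ↦ (MulEquiv.orderOf_eq _ k).trans hk) fun h1 ↦ hn ?_
  rw [← orderOf_one (G := K)]
  exact h1.symm

variable [Finite K]

theorem coprime_card (hF : IsFrobeniusWith K H) : (Nat.card K).Coprime (Nat.card H) := by
  have hdvd : Nat.card H ∣ ({1}ᶜ : Set K).ncard :=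
    card_dvd_ncard_of_fixedPointFree (fun h ↦ hF.fixedPointFree_conjHom)
      (fun h k hk ↦ by simpa using hk) (by simp)
  rw [← Set.ncard_add_ncard_compl ({1} : Set K), Set.ncard_singleton]
  exact .coprime_dvd_right hdvd (by simp)

theorem isConj_mul (hF : IsFrobeniusWith K H) {h : H} (hh : h ≠ 1) (k : K) :
    IsConj (h : G) (k * h) := by
  obtain ⟨x, rfl⟩ := (hF.fixedPointFree_conjHom hh).commutatorMap_surjective k
  refine isConj_iff.mpr ⟨x, ?_⟩
  simp [coe_conjHom_apply, div_eq_mul_inv, mul_assoc]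

theorem orderOf_mul (hF : IsFrobeniusWith K H) {h : H} (hh : h ≠ 1) (k : K) :
    orderOf (k * h : G) = orderOf h := by
  obtain ⟨x, hx⟩ := isConj_iff.mp (hF.isConj_mul hh k)
  rw [← hx, ← MulAut.conj_apply, MulEquiv.orderOf_eq, Subgroup.orderOf_coe]

theorem orderCount_eq [Finite H] (hF : IsFrobeniusWith K H) {n : ℕ} (hn : n ≠ 1) :
    orderCount G n = orderCount K n + Nat.card K * orderCount H n := by
  have hset (x : K × H) : orderOf (x.1 * x.2 : G) = n ↔
      x ∈ {k : K | orderOf k = n} ×ˢ {(1 : H)} ∪ Set.univ ×ˢ {h : H | orderOf h = n} := by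
    obtain ⟨k, h⟩ := x
    by_cases hh : h = 1
    · simp [hh, hn.symm]
    · simp [hh, hF.orderOf_mul hh]
  have hdisj : Disjoint ({k : K | orderOf k = n} ×ˢ {(1 : H)})
      (Set.univ ×ˢ {h : H | orderOf h = n}) := by
    refine Set.disjoint_left.mpr ?_
    rintro ⟨k, h⟩ ⟨-, rfl⟩ ⟨-, h1⟩
    exact hn (h1.symm.trans orderOf_one)
  have hcount : orderCount G n =
      ({k : K | orderOf k = n} ×ˢ {(1 : H)} ∪ Set.univ ×ˢ {h : H | orderOf h = n}).ncard := by
    rw [← Nat.card_coe_set_eq]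
    exact (Nat.card_congr ((Equiv.ofBijective _ hF.isComplement').subtypeEquiv
      fun x ↦ (hset x).symm)).symm
  rw [hcount, Set.ncard_union_eq hdisj, Set.ncard_prod, Set.ncard_prod, Set.ncard_singleton,
    Set.ncard_univ, mul_one, orderCount_eq_ncard, orderCount_eq_ncard]

theorem perfectOrderClasses_iff [Finite H] (hF : IsFrobeniusWith K H) :
    PerfectOrderClasses G ↔ PerfectOrderClasses H ∧
      ∀ n, 1 < n → orderCount K n = 0 ∨ orderCount K n ∣ Nat.card K * Nat.card H := by
  rw [perfectOrderClasses_iff_forall_one_lt, perfectOrderClasses_iff_forall_one_lt,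
    ← forall₂_and]
  refine forall₂_congr fun n hn ↦ ?_
  have hzero : orderCount K n = 0 ∨ orderCount H n = 0 := by
    by_contra! hne
    obtain ⟨x, hx⟩ := orderCount_ne_zero_iff.mp hne.1
    obtain ⟨y, hy⟩ := orderCount_ne_zero_iff.mp hne.2
    exact hn.ne' (Nat.eq_one_of_dvd_coprimes hF.coprime_card
      (hx ▸ orderOf_dvd_natCard x) (hy ▸ orderOf_dvd_natCard y))
  have hK : 0 < Nat.card K := Nat.card_pos
  rw [hF.orderCount_eq hn.ne', ← hF.isComplement'.card_mul_card]
  rcases hzero with h0 | h0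
  · simp [h0, Nat.mul_dvd_mul_iff_left hK, hK.ne']
  · simp [h0]

theorem commute_kernel_of_even_card [Finite H] (hF : IsFrobeniusWith K H)
    (heven : Even (Nat.card H)) (a b : K) : Commute a b := by
  obtain ⟨t, ht⟩ := exists_prime_orderOf_dvd_card' 2 (even_iff_two_dvd.mp heven)
  have ht1 : t ≠ 1 := by
    rintro rfl
    simp at ht
  have ht2 : t * t = 1 := by rw [← sq, ← ht, pow_orderOf_eq_one]
  refine (hF.fixedPointFree_conjHom ht1).commute_all_of_involutive (fun k ↦ ?_) a b
  rw [← MulAut.mul_apply, ← map_mul, ht2, map_one, MulAut.one_apply]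

end IsFrobeniusWith

/-- Theorem A: a finite Frobenius group has perfect order classes iff its complement does,
its kernel is a homocyclic `p`-group for an odd prime `p`, and `|H| = p^r - 1` where
`r` is the rank of the kernel. -/
theorem frobenius_perfectOrderClasses_iff
    {G : Type*} [Group G] [Fintype G] (K H : Subgroup G)
    (hFrob : IsFrobeniusWith K H) :
    PerfectOrderClasses G ↔
      PerfectOrderClasses H ∧
        ∃ p k r : ℕ, p.Prime ∧ Odd p ∧ 0 < k ∧ 0 < r ∧
          Nonempty (K ≃* (Fin r → Multiplicative (ZMod (p ^ k)))) ∧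
          Nat.card H = p ^ r - 1 := by
  have := hFrob.nontrivial_kernel
  have := hFrob.nontrivial_complement
  rw [hFrob.perfectOrderClasses_iff]
  refine and_congr_right fun hH ↦ ⟨fun hK ↦ ?_, ?_⟩
  · let : CommGroup K := .mk (hFrob.commute_kernel_of_even_card hH.even_card)
    obtain ⟨p, k, r, hp, hk, hr, he, hcard⟩ := exists_mulEquiv_pi_zmod_of_orderCount_dvd (A := K)
      Finite.one_lt_card hFrob.coprime_card
      (fun n hn ↦ hFrob.card_complement_dvd_orderCount hn.ne') hK
    exact ⟨p, k, r, hp, odd_of_even_pow_sub_one hp.pos hr.ne' (hcard ▸ hH.even_card), hk, hr, he,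
      hcard⟩
  · rintro ⟨p, k, r, hp, -, -, -, ⟨e⟩, hcard⟩ n hn
    rw [hcard]
    simpa using orderCount_dvd_of_mulEquiv_pi_zmod hp e hn
end

section
/- Let H be a finite non-abelian nilpotent group that is a Frobenius complement (i.e., H occurs as a Frobenius complement in some finite Frobenius group). Then H has perfect order classes if, and only if, H is isomorphic either to Q_8 × C_{3^k} or to Q_{16} × C_{5^k}, for some positive integer k, where Q_8 and Q_{16} are the generalised quaternion groups of orders 8 and 16 respectively. -/
/-!
If commuting elements `x`, `y` of `p`-power order act fixed-point-freely, `x` has order dividing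
that of `y` and `x` is not a power of `y`, then multiplying norms over the cyclic subgroups they
generate shows that the order of `y` annihilates every abelian section on which they act. As this
is prime to the order of the kernel, each Sylow subgroup of a Frobenius complement has only one
subgroup of prime order: it is cyclic or generalised quaternion. A non-abelian nilpotent complement
is therefore `Q × C` with `Q` of order `2 ^ (j + 2)` and `C` cyclic of odd order `n`.

Counting elements of order `d * n` for `d ∣ 2 ^ (j + 1)`, perfect order classes amount to
`(2 ^ j + 1) * φ n ∣ 2 ^ (j + 1) * n` (from `d = 4`) and `φ n ∣ 4 * n`. Comparing powers of `2`, the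
second condition leaves at most two primes in `n`, and both conditions depend only on which primes
these are: two primes would have to be `3` and `7`, where `2 ^ j + 1 ∣ 7` fails, and a single prime
must be `2 ^ j + 1` with `2 ^ j ∣ 4`.
-/

open MonoidHom (FixedPointFree)
open Subgroup (zpowers mem_zpowers zpowers_le mem_zpowers_iff)

theorem exists_mem_orderOf_eq_prime_of_ne_bot {p : ℕ} [Fact p.Prime] {P : Type*} [Group P]
    (hP : IsPGroup p P) {N : Subgroup P} (hN : N ≠ ⊥) : ∃ g ∈ N, orderOf g = p := by
  obtain ⟨g, hg, hg1⟩ := N.bot_or_exists_ne_one.resolve_left hN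
  have hord : orderOf g ≠ 0 := (hP.isOfFinOrder (Fact.out : p.Prime).ne_zero g).orderOf_pos.ne'
  exact ⟨_, pow_mem hg _, orderOf_pow_orderOf_div hord (hP.dvd_orderOf hg1)⟩

/-! ### Fixed-point-free actions -/

/-- The action `φ` of `A` on `K` by automorphisms is fixed-point-free: no nontrivial element of `A`
fixes a nontrivial element of `K`. -/
def ActsFixedPointFreely {A K : Type*} [Group A] [Group K] (φ : A →* MulAut K) : Prop :=
  ∀ a ≠ 1, FixedPointFree (φ a)

/-- The restriction of the action `φ` of `A` on `K` to an `A`-invariant subgroup of `K`. -/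
def restrictInvariant {A K : Type*} [Group A] [Group K] (φ : A →* MulAut K) (V : Subgroup K)
    (hV : ∀ a, ∀ v ∈ V, φ a v ∈ V) : A →* MulAut V :=
  let : MulDistribMulAction A K := .compHom K φ
  let : SMul A V := ⟨fun a v => ⟨φ a v, hV a v v.2⟩⟩
  let : MulDistribMulAction A V :=
    Function.Injective.mulDistribMulAction V.subtype V.subtype_injective fun _ _ => rfl
  MulDistribMulAction.toMulAut A V

theorem IsFrobeniusWith.actsFixedPointFreely_conjNormal {G : Type*} [Group G] {K H : Subgroup G}
    [K.Normal] (h : IsFrobeniusWith K H) :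
    ActsFixedPointFreely ((MulAut.conjNormal (H := K)).comp H.subtype) := by
  obtain ⟨-, -, -, -, -, hfree⟩ := h
  intro a ha k hk
  by_contra hk1
  refine hfree a a.2 (by simpa using ha) k k.2 (by simpa using hk1) ?_
  simpa using congrArg Subtype.val hk

namespace ActsFixedPointFreely

variable {A K V : Type*} [Group A] [Group K] [CommGroup V]

theorem comp_injective {B : Type*} [Group B] {φ : A →* MulAut K} (hφ : ActsFixedPointFreely φ)
    {f : B →* A} (hf : Function.Injective f) : ActsFixedPointFreely (φ.comp f) :=
  fun b hb => hφ (f b) ((map_ne_one_iff f hf).mpr hb)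

theorem prod_range_pow_apply {ψ : A →* MulAut V} (hψ : ActsFixedPointFreely ψ) {x : A} {n : ℕ}
    (hxn : x ^ n = 1) (hx : x ≠ 1) (v : V) : ∏ k ∈ Finset.range n, ψ (x ^ k) v = 1 := by
  refine hψ x hx _ ?_
  have hshift : (∏ k ∈ Finset.range n, ψ (x ^ (k + 1)) v) * ψ (x ^ 0) v =
      (∏ k ∈ Finset.range n, ψ (x ^ k) v) * ψ (x ^ n) v := by
    rw [← Finset.prod_range_succ' fun k => ψ (x ^ k) v, Finset.prod_range_succ]
  rw [hxn, pow_zero] at hshift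
  simpa only [map_prod, pow_succ', map_mul, MulAut.mul_apply] using mul_right_cancel hshift

/- Multiply the norms of `v` under all `x * y ^ i` and exchange the two products: the norms under
the nontrivial powers of `y` drop out, leaving `v ^ orderOf y`. -/
theorem pow_orderOf_eq_one_of_commute {ψ : A →* MulAut V} (hψ : ActsFixedPointFreely ψ) {x y : A}
    (hxy : Commute x y) (hx : x ^ orderOf y = 1) (hmem : x ∉ zpowers y) (v : V) :
    v ^ orderOf y = 1 := by
  rcases (orderOf y).eq_zero_or_pos with hy | hy
  · rw [hy, pow_zero]
  have hrow (i : ℕ) : ∏ k ∈ Finset.range (orderOf y), ψ ((x * y ^ i) ^ k) v = 1 := by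
    refine hψ.prod_range_pow_apply ?_ (fun h => hmem ?_) v
    · rw [(hxy.pow_right i).mul_pow, hx, one_mul, ← pow_mul, mul_comm, pow_mul,
        pow_orderOf_eq_one, one_pow]
    · rw [eq_inv_of_mul_eq_one_left h]
      exact inv_mem (Subgroup.npow_mem_zpowers y i)
  have hcolumn (k : ℕ) (hk : k ∈ Finset.range (orderOf y)) :
      ∏ i ∈ Finset.range (orderOf y), ψ ((x * y ^ i) ^ k) v =
        if k = 0 then v ^ orderOf y else 1 := by
    split_ifs with hk0
    · simp [hk0]
    · have hnorm : ∏ i ∈ Finset.range (orderOf y), ψ ((y ^ k) ^ i) v = 1 :=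
        hψ.prod_range_pow_apply (by rw [← pow_mul, mul_comm, pow_mul, pow_orderOf_eq_one, one_pow])
          (pow_ne_one_of_lt_orderOf hk0 (Finset.mem_range.mp hk)) v
      simp only [(hxy.pow_right _).mul_pow, ← pow_mul, mul_comm _ k, map_mul, MulAut.mul_apply,
        ← map_prod] at hnorm ⊢
      rw [hnorm, map_one]
  calc v ^ orderOf y
      = ∏ k ∈ Finset.range (orderOf y), if k = 0 then v ^ orderOf y else 1 := by
        rw [Finset.prod_ite_eq', if_pos (Finset.mem_range.mpr hy)]
    _ = ∏ k ∈ Finset.range (orderOf y), ∏ i ∈ Finset.range (orderOf y),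
          ψ ((x * y ^ i) ^ k) v := (Finset.prod_congr rfl hcolumn).symm
    _ = 1 := by
        rw [Finset.prod_comm, Finset.prod_congr rfl fun i _ => hrow i, Finset.prod_const_one]

theorem restrictInvariant {φ : A →* MulAut K} (hφ : ActsFixedPointFreely φ) {W : Subgroup K}
    (hW : ∀ a, ∀ v ∈ W, φ a v ∈ W) : ActsFixedPointFreely (restrictInvariant φ W hW) :=
  fun a ha v hv => Subtype.ext (hφ a ha v (congrArg Subtype.val hv))

theorem characteristic {φ : A →* MulAut K} (hφ : ActsFixedPointFreely φ) (W : Subgroup K)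
    [W.Characteristic] : ActsFixedPointFreely ((MulAut.characteristic W).comp φ) :=
  fun a ha v hv => Subtype.ext (hφ a ha v (congrArg Subtype.val hv))

variable {p : ℕ} [Fact p.Prime] [Finite K]

theorem not_dvd_card [Nontrivial A] {φ : A →* MulAut K} (hφ : ActsFixedPointFreely φ)
    (hA : IsPGroup p A) : ¬ p ∣ Nat.card K := by
  let : MulDistribMulAction A K := .compHom K φ
  intro hdvd
  obtain ⟨b, hb, hb1⟩ := hA.exists_fixed_point_of_prime_dvd_card_of_fixed_point K hdvd
    (a := 1) (fun a => smul_one a)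
  obtain ⟨a, ha⟩ := exists_ne (1 : A)
  exact hb1 (hφ a ha b (hb a)).symm

theorem exists_invariant_sylow [Nontrivial A] {φ : A →* MulAut K}
    (hφ : ActsFixedPointFreely φ) (hA : IsPGroup p A) (q : ℕ) [Fact q.Prime] :
    ∃ Q : Sylow q K, ∀ a, ∀ v ∈ Q, φ a v ∈ Q := by
  let : MulDistribMulAction A K := .compHom K φ
  have hdvd : Nat.card (Sylow q K) ∣ Nat.card K :=
    (default : Sylow q K).card_dvd_index.trans (Subgroup.index_dvd_card _)
  obtain ⟨Q, hQ⟩ := hA.nonempty_fixed_point_of_prime_not_dvd_card (Sylow q K)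
    fun hp => hφ.not_dvd_card hA (hp.trans hdvd)
  refine ⟨Q, fun a v hv => ?_⟩
  have hsmul : a • v ∈ a • Q := Subgroup.smul_mem_pointwise_smul v a Q.1 hv
  rwa [hQ a] at hsmul

open scoped IsMulCommutative in
theorem mem_zpowers_of_commute [Nontrivial K] {φ : A →* MulAut K} (hφ : ActsFixedPointFreely φ)
    (hA : IsPGroup p A) {x y : A} (hxy : Commute x y) (hx : x ^ orderOf y = 1) :
    x ∈ zpowers y := by
  by_contra hmem
  have : Nontrivial A := ⟨x, 1, fun h => hmem (h ▸ one_mem _)⟩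
  obtain ⟨q, hq, hqK⟩ := Nat.exists_prime_and_dvd (Finite.one_lt_card (α := K)).ne'
  have : Fact q.Prime := ⟨hq⟩
  obtain ⟨Q, hQ⟩ := hφ.exists_invariant_sylow hA q
  have : Nontrivial Q := Finite.one_lt_card_iff_nontrivial.mp
    (hq.one_lt.trans_le (Nat.le_of_dvd Nat.card_pos (Q.dvd_card_of_dvd_card hqK)))
  have := Q.2.center_nontrivial
  obtain ⟨v, hv⟩ := exists_ne (1 : Subgroup.center Q)
  have hvy : v ^ orderOf y = 1 :=
    ((hφ.restrictInvariant hQ).characteristic (Subgroup.center Q)).pow_orderOf_eq_one_of_commute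
      hxy hx hmem v
  have hcop : (orderOf y).Coprime (Nat.card K) :=
    hA.orderOf_coprime ((Fact.out : p.Prime).coprime_iff_not_dvd.mpr (hφ.not_dvd_card hA)) y
  have hvK : orderOf v ∣ Nat.card K := (orderOf_dvd_natCard v).trans
    ((Subgroup.card_subgroup_dvd_card _).trans (Subgroup.card_subgroup_dvd_card _))
  exact hv (orderOf_eq_one_iff.mp
    (Nat.eq_one_of_dvd_coprimes hcop (orderOf_dvd_of_pow_eq_one hvy) hvK))

theorem subsingleton_setOf_card_eq [Finite A] [Nontrivial K] {φ : A →* MulAut K}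
    (hφ : ActsFixedPointFreely φ) (hA : IsPGroup p A) :
    {B : Subgroup A | Nat.card B = p}.Subsingleton := by
  rcases subsingleton_or_nontrivial A with hA1 | hA1
  · exact fun B _ C _ => Subsingleton.elim B C
  obtain ⟨z, hz, hzp⟩ := exists_mem_orderOf_eq_prime_of_ne_bot hA hA.bot_lt_center.ne'
  have hcard : Nat.card (zpowers z) = p := (Nat.card_zpowers z).trans hzp
  have heq (B : Subgroup A) (hB : Nat.card B = p) : B = zpowers z := by
    refine Subgroup.eq_of_le_of_card_ge (fun x hx => ?_) (hcard.trans hB.symm).le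
    refine hφ.mem_zpowers_of_commute hA (Subgroup.mem_center_iff.mp hz x) ?_
    rw [hzp, ← hB]
    exact orderOf_dvd_iff_pow_eq_one.mp (B.orderOf_dvd_natCard hx)
  exact fun B hB C hC => (heq B hB).trans (heq C hC).symm

end ActsFixedPointFreely

/-! ### Geometric sums -/

theorem exists_prime_pow_dvd_mul_add {p t : ℤ} (ht : IsCoprime t p) (n : ℕ) (s : ℤ) :
    ∃ i, p ^ n ∣ i * (p * t) + p * s := by
  obtain ⟨u, v, huv⟩ := ht.pow_right (n := n)
  exact ⟨-s * u, p * s * v, by linear_combination (-p * s) * huv⟩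

theorem exists_geom_sum_eq_mul_of_odd {p : ℕ} (hp : Odd p) {r : ℤ} (hr : (p : ℤ) ∣ r - 1) :
    ∃ t : ℤ, IsCoprime t p ∧ ∑ j ∈ Finset.range p, r ^ j = p * t := by
  obtain ⟨w, hw⟩ := hr
  obtain ⟨c, hc⟩ := odd_sq_dvd_geom_sum₂_sub (a := (1 : ℤ)) (b := w) hp
  rw [← hw, add_sub_cancel] at hc
  simp only [one_pow, mul_one] at hc
  exact ⟨1 + p * c, ⟨1, -c, by ring⟩, by linear_combination hc⟩

theorem dvd_sub_one_of_dvd_pow_sub_one {p : ℕ} [Fact p.Prime] {r : ℤ} (h : (p : ℤ) ∣ r ^ p - 1) :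
    (p : ℤ) ∣ r - 1 := by
  rw [← ZMod.intCast_zmod_eq_zero_iff_dvd] at h ⊢
  push_cast at h ⊢
  rwa [ZMod.pow_card] at h

theorem two_pow_dvd_add_one {n : ℕ} {r s : ℤ} (hr2 : (2 : ℤ) ^ n ∣ r ^ 2 - 1)
    (hrs : (2 : ℤ) ^ n ∣ (r - 1) * (2 * s)) (hno : ∀ i : ℤ, ¬ (2 : ℤ) ^ n ∣ i * (1 + r) + 2 * s) :
    (2 : ℤ) ^ n ∣ r + 1 := by
  have hn : n ≠ 0 := by
    rintro rfl
    exact hno 0 (by simp)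
  obtain ⟨t, ht⟩ : ∃ t, 1 + r = 2 * t := by
    have h2 : (2 : ℤ) ∣ (r - 1) * (1 + r) := by
      have hring : (r - 1) * (1 + r) = r ^ 2 - 1 := by ring
      exact hring ▸ (dvd_pow_self 2 hn).trans hr2
    rcases Int.prime_two.dvd_or_dvd h2 with h | h
    · exact ⟨1 + (r - 1) / 2, by omega⟩
    · exact h
  obtain ⟨u, rfl⟩ : (2 : ℤ) ∣ t := by
    by_contra hodd
    obtain ⟨i, hi⟩ := exists_prime_pow_dvd_mul_add
      ((Prime.coprime_iff_not_dvd Int.prime_two).mpr hodd).symm n s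
    exact hno i (ht ▸ hi)
  have hcop : IsCoprime ((2 : ℤ) ^ n) (2 * u - 1) := IsCoprime.pow_left ⟨u, -1, by ring⟩
  obtain ⟨α, hα⟩ : (2 : ℤ) ^ n ∣ 2 * (2 * s) :=
    hcop.dvd_of_dvd_mul_left (hrs.trans (dvd_of_eq (by linear_combination 2 * s * ht)))
  obtain ⟨β, hβ⟩ : (2 : ℤ) ^ n ∣ 2 * (1 + r) :=
    hcop.dvd_of_dvd_mul_left (hr2.trans (dvd_of_eq (by linear_combination (1 + r) * ht)))
  have hα2 : ¬ (2 : ℤ) ∣ α := fun ⟨γ, hγ⟩ => hno 0 ⟨γ, by subst hγ; linarith⟩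
  by_contra hr
  have hβ2 : ¬ (2 : ℤ) ∣ β := fun ⟨γ, hγ⟩ => hr ⟨γ, by subst hγ; linarith⟩
  obtain ⟨γ, hγ⟩ : (2 : ℤ) ∣ α + β := by omega
  exact hno 1 ⟨γ, mul_left_cancel₀ two_ne_zero (by linear_combination hα + hβ + 2 ^ n * hγ)⟩

/-! ### Groups of prime power order with at most one subgroup of prime order -/

section Conjugation

variable {G : Type*} [Group G] {a x : G} {r : ℤ}

theorem semiconjBy_pow_zpow_pow (h : SemiconjBy x a (a ^ r)) (k : ℕ) :
    SemiconjBy (x ^ k) a (a ^ r ^ k) := by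
  induction k with
  | zero => simp
  | succ k ih =>
    rw [pow_succ', pow_succ', zpow_mul]
    exact (h.zpow_right (r ^ k)).mul_left ih

theorem zpow_mul_pow_of_semiconjBy (h : SemiconjBy x a (a ^ r)) (i : ℤ) (k : ℕ) :
    (a ^ i * x) ^ k = a ^ (i * ∑ j ∈ Finset.range k, r ^ j) * x ^ k := by
  induction k with
  | zero => simp
  | succ k ih =>
    have hcomm : x ^ k * a ^ i = a ^ (r ^ k * i) * x ^ k := by
      rw [zpow_mul]; exact (semiconjBy_pow_zpow_pow h k).zpow_right i
    calc (a ^ i * x) ^ (k + 1)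
        = a ^ (i * ∑ j ∈ Finset.range k, r ^ j) * (x ^ k * a ^ i) * x := by
          rw [pow_succ, ih]; simp only [mul_assoc]
      _ = a ^ (i * ∑ j ∈ Finset.range (k + 1), r ^ j) * x ^ (k + 1) := by
          rw [hcomm, Finset.sum_range_succ, mul_add, zpow_add, mul_comm i (r ^ k), pow_succ]
          simp only [mul_assoc]

theorem zpow_pow_eq_self_of_semiconjBy (h : SemiconjBy x a (a ^ r)) {k : ℕ}
    (hx : x ^ k ∈ zpowers a) : a ^ r ^ k = a := by
  have hconj := semiconjBy_pow_zpow_pow h k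
  obtain ⟨s, hs⟩ := mem_zpowers_iff.mp hx
  rw [← hs] at hconj
  exact mul_right_cancel (hconj.symm.trans (Commute.zpow_self a s))

theorem exists_semiconjBy_zpow_of_normal (ha : (zpowers a).Normal) (x : G) :
    ∃ r : ℤ, SemiconjBy x a (a ^ r) := by
  obtain ⟨r, hr⟩ := Subgroup.mem_zpowers_iff.mp (ha.conj_mem a (mem_zpowers a) x)
  exact ⟨r, (mul_inv_eq_iff_eq_mul.mp hr.symm)⟩

end Conjugation

section ChiefSteps

variable {p : ℕ} [Fact p.Prime] {P : Type*} [Group P] [Finite P]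

open Subgroup in
theorem inf_center_ne_bot_of_normal (hP : IsPGroup p P) {N : Subgroup P} [N.Normal] (hN : N ≠ ⊥) :
    N ⊓ center P ≠ ⊥ := by
  have : Nontrivial N := (nontrivial_iff_ne_bot N).mpr hN
  have hpN : p ∣ Nat.card N :=
    (hP.to_subgroup N).card_eq_or_dvd.resolve_left Finite.one_lt_card.ne'
  obtain ⟨b, hb, hb1⟩ :=
    (hP.of_equiv ConjAct.toConjAct).exists_fixed_point_of_prime_dvd_card_of_fixed_point N hpN
      (a := 1) (fun g => smul_one g)
  have hbZ : (b : P) ∈ center P := mem_center_iff.mpr fun g => by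
    have hfix := congrArg Subtype.val (hb (ConjAct.toConjAct g))
    rw [ConjAct.Subgroup.val_conj_smul, ConjAct.smul_def, ConjAct.ofConjAct_toConjAct] at hfix
    exact mul_inv_eq_iff_eq_mul.mp hfix
  intro hbot
  have hb' : (b : P) ∈ N ⊓ center P := ⟨b.2, hbZ⟩
  rw [hbot, mem_bot] at hb'
  exact hb1 (Subtype.ext hb').symm

open scoped commutatorElement in
theorem exists_mem_pow_prime_mem_of_lt (hP : IsPGroup p P) {B C : Subgroup P} [B.Normal] [C.Normal]
    (hBC : B < C) : ∃ x ∈ C, x ∉ B ∧ x ^ p ∈ B ∧ ∀ g : P, ⁅g, x⁆ ∈ B := by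
  have : (C.map (QuotientGroup.mk' B)).Normal :=
    Subgroup.Normal.map inferInstance _ (QuotientGroup.mk'_surjective B)
  have hC : C.map (QuotientGroup.mk' B) ≠ ⊥ := fun h => hBC.not_ge (by
    rwa [Subgroup.map_eq_bot_iff, QuotientGroup.ker_mk'] at h)
  have hPB := hP.to_quotient B
  obtain ⟨y, ⟨hyC, hyZ⟩, hyp⟩ :=
    exists_mem_orderOf_eq_prime_of_ne_bot hPB (inf_center_ne_bot_of_normal hPB hC)
  obtain ⟨x, hxC, rfl⟩ := hyC
  refine ⟨x, hxC, fun hxB => ?_, ?_, fun g => ?_⟩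
  · rw [QuotientGroup.mk'_apply, (QuotientGroup.eq_one_iff x).mpr hxB, orderOf_one] at hyp
    exact (Fact.out : p.Prime).one_lt.ne hyp
  · rw [← QuotientGroup.eq_one_iff]
    exact hyp ▸ pow_orderOf_eq_one (QuotientGroup.mk' B x)
  · rw [← QuotientGroup.eq_one_iff, ← QuotientGroup.mk'_apply, map_commutatorElement,
      commutatorElement_eq_one_iff_mul_comm]
    exact Subgroup.mem_center_iff.mp hyZ g

end ChiefSteps

section UniqueSubgroup

variable {p : ℕ} [Fact p.Prime] {P : Type*} [Group P] {a x : P}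

theorem mem_zpowers_of_pow_prime_eq_one (hP : IsPGroup p P)
    (hsub : {B : Subgroup P | Nat.card B = p}.Subsingleton) (hx : x ^ p = 1) (ha : a ≠ 1) :
    x ∈ zpowers a := by
  rcases eq_or_ne x 1 with rfl | hx1
  · exact one_mem _
  obtain ⟨b, hb, hbp⟩ :=
    exists_mem_orderOf_eq_prime_of_ne_bot hP (Subgroup.zpowers_ne_bot.mpr ha)
  have hxb : zpowers x = zpowers b := hsub
    ((Nat.card_zpowers x).trans (orderOf_eq_prime hx hx1)) ((Nat.card_zpowers b).trans hbp)
  exact zpowers_le.mpr hb (hxb ▸ mem_zpowers x)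

theorem exists_pow_prime_eq_zpow_mul (hP : IsPGroup p P) (hxp : x ^ p ∈ zpowers a)
    (ha : a ∉ zpowers x) : ∃ s : ℤ, x ^ p = a ^ (p * s) := by
  obtain ⟨s, hs⟩ := mem_zpowers_iff.mp hxp
  suffices h : (p : ℤ) ∣ s by
    obtain ⟨t, rfl⟩ := h
    exact ⟨t, hs.symm⟩
  by_contra hps
  refine ha (zpowers_le.mpr (Subgroup.npow_mem_zpowers x p) (hs ▸ mem_zpowers_zpow_iff.mpr ?_))
  obtain ⟨n, hn⟩ := IsPGroup.iff_orderOf.mp hP a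
  rw [hn, Int.gcd_comm, Nat.cast_pow]
  exact Int.isCoprime_iff_gcd_eq_one.mp ((Prime.coprime_iff_not_dvd
    (Nat.prime_iff_prime_int.mp Fact.out)).mpr hps).pow_left

theorem zpow_mul_pow_prime_ne_one (hP : IsPGroup p P)
    (hsub : {B : Subgroup P | Nat.card B = p}.Subsingleton) (ha : a ≠ 1) (hx : x ∉ zpowers a)
    (i : ℤ) : (a ^ i * x) ^ p ≠ 1 := fun h =>
  hx ((mul_mem_cancel_left (zpow_mem (mem_zpowers a) i)).mp
    (mem_zpowers_of_pow_prime_eq_one hP hsub h ha))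

theorem mem_zpowers_of_commute_of_pow_prime_mem (hP : IsPGroup p P)
    (hsub : {B : Subgroup P | Nat.card B = p}.Subsingleton) (hxa : Commute x a)
    (hxp : x ^ p ∈ zpowers a) (hx : x ∉ zpowers a) : a ∈ zpowers x := by
  by_contra ha
  obtain ⟨s, hs⟩ := exists_pow_prime_eq_zpow_mul hP hxp ha
  have ha1 : a ≠ 1 := fun h => ha (h ▸ one_mem _)
  refine zpow_mul_pow_prime_ne_one hP hsub ha1 hx (-s) ?_
  rw [(hxa.symm.zpow_left (-s)).mul_pow, hs, ← zpow_natCast, ← zpow_mul, ← zpow_add,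
    neg_mul, mul_comm s, neg_add_cancel, zpow_zero]

/- An element `a ^ i * x` of order `p` would lie in `zpowers a`. Since `(a ^ i * x) ^ p` equals
`a ^ (i * (1 + r + ⋯ + r ^ (p - 1)) + p * s)`, where `x ^ p = a ^ (p * s)`, it thus suffices to
solve a congruence for `i` modulo the order of `a`. -/
theorem eq_two_and_semiconjBy_inv (hP : IsPGroup p P)
    (hsub : {B : Subgroup P | Nat.card B = p}.Subsingleton) {r : ℤ} (hxa : SemiconjBy x a (a ^ r))
    (hxp : x ^ p ∈ zpowers a) (hcomm : ¬ Commute x a) : p = 2 ∧ SemiconjBy x a a⁻¹ := by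
  obtain ⟨n, hn⟩ := IsPGroup.iff_orderOf.mp hP a
  have hzpow {k l : ℤ} : a ^ k = a ^ l ↔ (p : ℤ) ^ n ∣ k - l := by
    rw [← orderOf_dvd_sub_iff_zpow_eq_zpow, hn, Nat.cast_pow]
  have ha1 : a ≠ 1 := fun h => hcomm (h ▸ Commute.one_right x)
  have hx : x ∉ zpowers a := fun h => by
    obtain ⟨i, rfl⟩ := mem_zpowers_iff.mp h
    exact hcomm (Commute.zpow_self a i)
  obtain ⟨s, hs⟩ := exists_pow_prime_eq_zpow_mul hP hxp fun h => hcomm (by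
    obtain ⟨i, rfl⟩ := mem_zpowers_iff.mp h
    exact Commute.self_zpow x i)
  have hno (i : ℤ) : ¬ (p : ℤ) ^ n ∣ i * (∑ j ∈ Finset.range p, r ^ j) + p * s := fun hdvd => by
    refine zpow_mul_pow_prime_ne_one hP hsub ha1 hx i ?_
    rwa [zpow_mul_pow_of_semiconjBy hxa, hs, ← zpow_add, ← zpow_zero a, hzpow, sub_zero]
  have hrp : (p : ℤ) ^ n ∣ r ^ p - 1 := by
    rw [← hzpow, zpow_one, zpow_pow_eq_self_of_semiconjBy hxa hxp]
  rcases (Fact.out : p.Prime).eq_two_or_odd' with rfl | hodd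
  · have hrs : (2 : ℤ) ^ n ∣ (r - 1) * (2 * s) := by
      have hconj : SemiconjBy x (x ^ 2) (a ^ (r * (2 * s))) := by
        rw [hs, zpow_mul a r]
        exact hxa.zpow_right _
      have hfix := mul_right_cancel (hconj.symm.trans ((Commute.refl x).pow_right 2))
      rw [hs, hzpow] at hfix
      simpa only [Nat.cast_ofNat, sub_one_mul] using hfix
    have hr : a ^ r = a ^ (-1 : ℤ) := hzpow.mpr <| by
      rw [sub_neg_eq_add]
      exact two_pow_dvd_add_one hrp hrs (by simpa [Finset.sum_range_succ] using hno)
    rw [hr, zpow_neg_one] at hxa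
    exact ⟨rfl, hxa⟩
  · have hn0 : n ≠ 0 := by
      rintro rfl
      exact hno 0 (by simp)
    obtain ⟨t, ht, hsum⟩ := exists_geom_sum_eq_mul_of_odd hodd
      (dvd_sub_one_of_dvd_pow_sub_one ((dvd_pow_self _ hn0).trans hrp))
    obtain ⟨i, hi⟩ := exists_prime_pow_dvd_mul_add ht n s
    exact absurd (hsum ▸ hi) (hno i)

open scoped commutatorElement in
theorem normal_zpowers_of_commutatorElement_mem (h : ∀ g : P, ⁅g, x⁆ ∈ zpowers x) :
    (zpowers x).Normal := by
  refine ⟨fun y hy g => ?_⟩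
  obtain ⟨i, rfl⟩ := mem_zpowers_iff.mp hy
  rw [← conj_zpow, ← inv_mul_cancel_right (g * x * g⁻¹) x]
  exact zpow_mem (mul_mem (h g) (mem_zpowers x)) i

/- For a normal cyclic subgroup `zpowers a` of maximal order, a chief step from it into its
centralizer would yield a larger one. -/
theorem exists_normal_zpowers_of_commute_mem [Finite P] (hP : IsPGroup p P)
    (hsub : {B : Subgroup P | Nat.card B = p}.Subsingleton) :
    ∃ a : P, (zpowers a).Normal ∧ ∀ g, Commute g a → g ∈ zpowers a := by
  obtain ⟨a, ha, hmax⟩ := Set.exists_max_image {a : P | (zpowers a).Normal} orderOf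
    (Set.toFinite _) ⟨1, by simp⟩
  have : (zpowers a).Normal := ha
  refine ⟨a, ha, ?_⟩
  by_contra! hcent
  obtain ⟨g, hga, hg⟩ := hcent
  have hlt : zpowers a < Subgroup.centralizer (zpowers a) :=
    (Subgroup.le_centralizer (zpowers a)).lt_of_not_ge fun hle => hg (hle ?_)
  · obtain ⟨x, hxC, hx, hxp, hcomm⟩ := exists_mem_pow_prime_mem_of_lt hP hlt
    have hax : zpowers a ≤ zpowers x := zpowers_le.mpr
      (mem_zpowers_of_commute_of_pow_prime_mem hP hsub
        (Subgroup.mem_centralizer_iff.mp hxC a (mem_zpowers a)).symm hxp hx)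
    have hle : orderOf x ≤ orderOf a :=
      hmax x (normal_zpowers_of_commutatorElement_mem fun g => hax (hcomm g))
    rw [← Nat.card_zpowers, ← Nat.card_zpowers] at hle
    exact hx (Subgroup.eq_of_le_of_card_ge hax hle ▸ mem_zpowers x)
  · rw [Subgroup.mem_centralizer_iff]
    rintro _ ⟨i, rfl⟩
    exact (hga.zpow_right i).symm

theorem isCyclic_of_subsingleton_of_odd [Finite P] (hp : Odd p) (hP : IsPGroup p P)
    (hsub : {B : Subgroup P | Nat.card B = p}.Subsingleton) : IsCyclic P := by
  obtain ⟨a, ha, hcent⟩ := exists_normal_zpowers_of_commute_mem hP hsub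
  rw [isCyclic_iff_exists_zpowers_eq_top]
  refine ⟨a, not_lt_top_iff.mp fun hlt => ?_⟩
  obtain ⟨x, -, hx, hxp, -⟩ := exists_mem_pow_prime_mem_of_lt hP hlt
  obtain ⟨r, hr⟩ := exists_semiconjBy_zpow_of_normal ha x
  obtain ⟨rfl, -⟩ := eq_two_and_semiconjBy_inv hP hsub hr hxp fun h => hx (hcent x h)
  exact absurd hp (by decide)

end UniqueSubgroup

/-! ### Generalised quaternion groups -/

section QuaternionLift

variable {G : Type*} [Group G] {a x : G} {m : ℕ}

/-- The homomorphism from the cyclic group of order `n` sending its generator `1` to an element `a`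
with `a ^ n = 1`. -/
def zmodPowersHom {n : ℕ} (ha : a ^ n = 1) : Multiplicative (ZMod n) →* G :=
  AddMonoidHom.toMultiplicativeLeft <| ZMod.lift n
    ⟨zmultiplesHom (Additive G) (.ofMul a), by simp [← ofMul_pow, ha]⟩

theorem zmodPowersHom_ofAdd_intCast {n : ℕ} (ha : a ^ n = 1) (i : ℤ) :
    zmodPowersHom ha (.ofAdd (i : ZMod n)) = a ^ i := by
  simp [zmodPowersHom]

theorem zpow_mul_eq_mul_zpow_neg (hxa : SemiconjBy x a a⁻¹) (i : ℤ) :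
    a ^ i * x = x * a ^ (-i) := by
  have h := hxa.zpow_right (-i)
  rw [inv_zpow', neg_neg] at h
  exact h.symm

/-- The homomorphism from the generalised quaternion group of order `4 * m` to `G` sending its
generators `a 1` and `xa 0` to elements `a` and `x` satisfying its defining relations. -/
def quaternionLift (ha : a ^ (2 * m) = 1) (hxa : SemiconjBy x a a⁻¹) (hx : x ^ 2 = a ^ m) :
    QuaternionGroup m →* G :=
  MonoidHom.mk' (fun
    | .a i => zmodPowersHom ha (.ofAdd i)
    | .xa i => x * zmodPowersHom ha (.ofAdd i)) <| by
  rintro (i | i) (j | j) <;> obtain ⟨k, rfl⟩ := ZMod.intCast_surjective i <;>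
    obtain ⟨l, rfl⟩ := ZMod.intCast_surjective j
  · simp only [QuaternionGroup.a_mul_a, ofAdd_add, map_mul]
  · simp only [QuaternionGroup.a_mul_xa, ← Int.cast_sub, zmodPowersHom_ofAdd_intCast]
    rw [← mul_assoc, zpow_mul_eq_mul_zpow_neg hxa, mul_assoc, ← zpow_add, neg_add_eq_sub]
  · simp only [QuaternionGroup.xa_mul_a, ofAdd_add, map_mul, mul_assoc]
  · simp only [QuaternionGroup.xa_mul_xa, ← Int.cast_natCast (R := ZMod (2 * m)) m,
      ← Int.cast_add, ← Int.cast_sub, zmodPowersHom_ofAdd_intCast]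
    rw [mul_assoc x, ← mul_assoc _ x, zpow_mul_eq_mul_zpow_neg hxa, mul_assoc x, ← mul_assoc x,
      ← sq, hx, ← zpow_natCast, ← zpow_add, ← zpow_add, neg_add_eq_sub, add_sub_assoc]

theorem quaternionLift_a (ha : a ^ (2 * m) = 1) (hxa : SemiconjBy x a a⁻¹) (hx : x ^ 2 = a ^ m)
    (i : ℤ) : quaternionLift ha hxa hx (.a i) = a ^ i :=
  zmodPowersHom_ofAdd_intCast ha i

theorem quaternionLift_xa (ha : a ^ (2 * m) = 1) (hxa : SemiconjBy x a a⁻¹) (hx : x ^ 2 = a ^ m)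
    (i : ℤ) : quaternionLift ha hxa hx (.xa i) = x * a ^ i :=
  congrArg (x * ·) (zmodPowersHom_ofAdd_intCast ha i)

theorem quaternionLift_injective (hord : orderOf a = 2 * m) (ha : a ^ (2 * m) = 1)
    (hxa : SemiconjBy x a a⁻¹) (hx : x ^ 2 = a ^ m) (hmem : x ∉ zpowers a) :
    Function.Injective (quaternionLift ha hxa hx) := by
  rw [injective_iff_map_eq_one]
  rintro (i | i) h <;> obtain ⟨k, rfl⟩ := ZMod.intCast_surjective i
  · rw [quaternionLift_a, ← orderOf_dvd_iff_zpow_eq_one, hord] at h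
    rw [(ZMod.intCast_zmod_eq_zero_iff_dvd k _).mpr h, QuaternionGroup.a_zero]
  · rw [quaternionLift_xa] at h
    exact absurd (eq_inv_of_mul_eq_one_left h ▸ inv_mem (zpow_mem (mem_zpowers a) k)) hmem

theorem quaternionLift_surjective (ha : a ^ (2 * m) = 1) (hxa : SemiconjBy x a a⁻¹)
    (hx : x ^ 2 = a ^ m) (hgen : ∀ g, g ∈ zpowers a ∨ x * g ∈ zpowers a) :
    Function.Surjective (quaternionLift ha hxa hx) := by
  intro g
  rcases hgen g with h | h <;> obtain ⟨k, hk⟩ := mem_zpowers_iff.mp h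
  · exact ⟨.a k, hk ▸ quaternionLift_a ha hxa hx k⟩
  · refine ⟨.xa (k - m : ℤ), mul_left_cancel (a := x) ?_⟩
    rw [quaternionLift_xa, ← hk, ← mul_assoc, ← sq, hx, ← zpow_natCast, ← zpow_add,
      add_sub_cancel]

end QuaternionLift

section QuaternionTwoGroups

variable {P : Type*} [Group P] {a x : P}

theorem pow_mem_of_forall_pow_pow_mem {p : ℕ} (hP : IsPGroup p P) {A : Subgroup P}
    (hA : ∀ w : P, (w ^ p) ^ p ∈ A → w ^ p ∈ A) (g : P) : g ^ p ∈ A := by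
  obtain ⟨k, hk⟩ := hP g
  have hk' : g ^ p ^ (k + 1) ∈ A := by
    rw [pow_succ, pow_mul, hk, one_pow]
    exact one_mem A
  clear hk
  induction k with
  | zero => simpa using hk'
  | succ k ih =>
    rw [pow_succ, pow_mul, pow_succ, pow_mul] at hk'
    exact ih (by simpa only [pow_succ, pow_mul] using hA _ hk')

/- `-1` is not a square modulo `4`. -/
theorem not_semiconjBy_sq_inv_of_four_dvd (ha : (zpowers a).Normal) (h4 : 4 ∣ orderOf a) (w : P) :
    ¬ SemiconjBy (w ^ 2) a a⁻¹ := by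
  intro hinv
  obtain ⟨r, hr⟩ := exists_semiconjBy_zpow_of_normal ha w
  have hpow : a ^ r ^ 2 = a ^ (-1 : ℤ) := by
    rw [zpow_neg_one]
    exact mul_right_cancel ((semiconjBy_pow_zpow_pow hr 2).symm.trans hinv)
  have hdvd : (4 : ℤ) ∣ r ^ 2 + 1 := by
    rw [← orderOf_dvd_sub_iff_zpow_eq_zpow, sub_neg_eq_add] at hpow
    exact (Int.natCast_dvd_natCast.mpr h4).trans hpow
  rcases Int.even_or_odd' r with ⟨s, rfl | rfl⟩ <;> ring_nf at hdvd <;> omega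

theorem four_dvd_orderOf_of_semiconjBy_inv (hP : IsPGroup 2 P) (hxa : SemiconjBy x a a⁻¹)
    (hcomm : ¬ Commute x a) : 4 ∣ orderOf a := by
  obtain ⟨n, hn⟩ := IsPGroup.iff_orderOf.mp hP a
  rw [hn]
  refine pow_dvd_pow 2 (m := 2) (not_lt.mp fun hn2 => hcomm ?_)
  have ha : a ^ 2 = 1 := orderOf_dvd_iff_pow_eq_one.mp (hn ▸ pow_dvd_pow 2 (Nat.le_of_lt_succ hn2))
  rwa [inv_eq_of_mul_eq_one_left (sq a ▸ ha)] at hxa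

theorem sq_eq_pow_of_semiconjBy_inv {m : ℕ} (hord : orderOf a = 2 * m) (hxa : SemiconjBy x a a⁻¹)
    (hx : x ^ 2 ∈ zpowers a) (hx1 : x ^ 2 ≠ 1) : x ^ 2 = a ^ m := by
  obtain ⟨i, hi⟩ := mem_zpowers_iff.mp hx
  have hneg : a ^ i = a ^ (-i) := by
    refine mul_left_cancel (a := x) ?_
    rw [← zpow_mul_eq_mul_zpow_neg hxa, hi]
    exact (Commute.refl x).pow_right 2
  rw [← orderOf_dvd_sub_iff_zpow_eq_zpow, hord, sub_neg_eq_add, ← two_mul, Nat.cast_mul,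
    Nat.cast_two] at hneg
  obtain ⟨j, rfl⟩ := (mul_dvd_mul_iff_left two_ne_zero).mp hneg
  have ha : (a ^ m) ^ 2 = 1 := by rw [← pow_mul, mul_comm, ← hord, pow_orderOf_eq_one]
  rw [zpow_mul, zpow_natCast] at hi
  rcases Int.even_or_odd' j with ⟨l, rfl | rfl⟩
  · rw [zpow_mul, zpow_ofNat, ha, one_zpow] at hi
    exact absurd hi.symm hx1
  · rw [zpow_add_one, zpow_mul, zpow_ofNat, ha, one_zpow, one_mul] at hi
    exact hi.symm

variable [Finite P]

theorem exists_quaternion_generators (hP : IsPGroup 2 P)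
    (hsub : {B : Subgroup P | Nat.card B = 2}.Subsingleton) (hcyc : ¬ IsCyclic P) :
    ∃ (a x : P) (n : ℕ), orderOf a = 2 * 2 ^ (n + 1) ∧ SemiconjBy x a a⁻¹ ∧
      x ^ 2 = a ^ 2 ^ (n + 1) ∧ x ∉ zpowers a ∧ ∀ g, g ∈ zpowers a ∨ x * g ∈ zpowers a := by
  obtain ⟨a, ha, hcent⟩ := exists_normal_zpowers_of_commute_mem hP hsub
  have htop : zpowers a < ⊤ := lt_top_iff_ne_top.mpr fun h =>
    hcyc (isCyclic_iff_exists_zpowers_eq_top.mpr ⟨a, h⟩)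
  obtain ⟨x, -, hx, hx2, -⟩ := exists_mem_pow_prime_mem_of_lt hP htop
  have hinv (g : P) (hg : g ∉ zpowers a) (hg2 : g ^ 2 ∈ zpowers a) : SemiconjBy g a a⁻¹ := by
    obtain ⟨r, hr⟩ := exists_semiconjBy_zpow_of_normal ha g
    exact (eq_two_and_semiconjBy_inv hP hsub hr hg2 fun h => hg (hcent g h)).2
  have hxa := hinv x hx hx2
  have h4 : 4 ∣ orderOf a :=
    four_dvd_orderOf_of_semiconjBy_inv hP hxa fun h => hx (hcent x h)
  have hsq : ∀ g : P, g ^ 2 ∈ zpowers a := pow_mem_of_forall_pow_pow_mem hP fun w hw => by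
    by_contra hw'
    exact not_semiconjBy_sq_inv_of_four_dvd ha h4 w (hinv _ hw' hw)
  obtain ⟨n, hn⟩ : ∃ n, orderOf a = 2 * 2 ^ (n + 1) := by
    obtain ⟨k, hk⟩ := IsPGroup.iff_orderOf.mp hP a
    have hk2 : 2 ≤ k := (Nat.pow_dvd_pow_iff_le_right one_lt_two).mp (hk ▸ h4)
    exact ⟨k - 2, by rw [hk, ← pow_succ']; congr; omega⟩
  have hx1 : x ^ 2 ≠ 1 := fun h => hx (mem_zpowers_of_pow_prime_eq_one hP hsub h fun ha1 => by
    simp [ha1] at h4)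
  refine ⟨a, x, n, hn, hxa, sq_eq_pow_of_semiconjBy_inv hn hxa hx2 hx1, hx, fun g => ?_⟩
  refine or_iff_not_imp_left.mpr fun hg => hcent _ ?_
  have hxg : SemiconjBy (x * g) a a⁻¹⁻¹ := hxa.inv_right.mul_left (hinv g hg (hsq g))
  rwa [inv_inv] at hxg

theorem exists_mulEquiv_quaternionGroup (hP : IsPGroup 2 P)
    (hsub : {B : Subgroup P | Nat.card B = 2}.Subsingleton) (hcyc : ¬ IsCyclic P) :
    ∃ j, 1 ≤ j ∧ Nonempty (P ≃* QuaternionGroup (2 ^ j)) := by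
  obtain ⟨a, x, n, hord, hxa, hx, hmem, hgen⟩ := exists_quaternion_generators hP hsub hcyc
  have ha := hord ▸ pow_orderOf_eq_one a
  exact ⟨n + 1, n.succ_pos, ⟨(MulEquiv.ofBijective (quaternionLift ha hxa hx)
    ⟨quaternionLift_injective hord ha hxa hx hmem,
      quaternionLift_surjective ha hxa hx hgen⟩).symm⟩⟩

end QuaternionTwoGroups

/-! ### Nilpotent groups acting fixed-point-freely -/

theorem commute_of_coprime_orderOf {G : Type*} [Group G] [Finite G] [Group.IsNilpotent G] {x y : G}
    (h : (orderOf x).Coprime (orderOf y)) : Commute x y := by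
  obtain ⟨e⟩ := (Group.isNilpotent_of_finite_tfae (G := G).out 0 4).mp ‹_›
  suffices Commute (e.symm x) (e.symm y) by simpa using this.map e
  refine funext fun p => funext fun P => ?_
  have hp : Fact (p : ℕ).Prime := ⟨Nat.prime_of_mem_primeFactors p.2⟩
  let π : G →* P := (Pi.evalMonoidHom _ P).comp ((Pi.evalMonoidHom _ p).comp e.symm.toMonoidHom)
  change Commute (π x) (π y)
  by_contra hcomm
  have hx : π x ≠ 1 := fun h1 => hcomm (h1 ▸ Commute.one_left _)
  have hy : π y ≠ 1 := fun h1 => hcomm (h1 ▸ Commute.one_right _)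
  exact Nat.not_coprime_of_dvd_of_dvd hp.out.one_lt
    ((P.2.dvd_orderOf hx).trans (orderOf_map_dvd π x))
    ((P.2.dvd_orderOf hy).trans (orderOf_map_dvd π y)) h

theorem exists_sylow_prod_mulEquiv {G : Type*} [Group G] [Finite G] [Group.IsNilpotent G] {p : ℕ}
    [Fact p.Prime] (S : Sylow p G) :
    ∃ N : Subgroup G, ¬ p ∣ Nat.card N ∧ Nonempty (S.toSubgroup × N ≃* G) := by
  obtain ⟨N, hN⟩ := Subgroup.exists_right_complement'_of_coprime S.card_coprime_index
  have hcard : Nat.card N = S.index := hN.symm.index_eq_card.symm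
  have hcomm (s : S.toSubgroup) (n : N) : Commute (s : G) (n : G) :=
    commute_of_coprime_orderOf (Nat.Coprime.of_dvd (S.orderOf_dvd_natCard s.2)
      (N.orderOf_dvd_natCard n.2) (hcard ▸ S.card_coprime_index))
  exact ⟨N, hcard ▸ S.not_dvd_index, ⟨MulEquiv.ofBijective
    (S.toSubgroup.subtype.noncommCoprod N.subtype hcomm) hN⟩⟩

namespace ActsFixedPointFreely

variable {A K : Type*} [Group A] [Finite A] [Group.IsNilpotent A] [Group K] [Finite K]
  [Nontrivial K] {φ : A →* MulAut K}

theorem isCyclic_of_odd_card (hφ : ActsFixedPointFreely φ) (hA : Odd (Nat.card A)) :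
    IsCyclic A := by
  have : IsZGroup A := ⟨fun p hp P => by
    have : Fact p.Prime := ⟨hp⟩
    rcases subsingleton_or_nontrivial P with hP1 | hP1
    · infer_instance
    · have hpA : p ∣ Nat.card A :=
        (P.2.card_eq_or_dvd.resolve_left Finite.one_lt_card.ne').trans
          (Subgroup.card_subgroup_dvd_card P.toSubgroup)
      exact isCyclic_of_subsingleton_of_odd (hA.of_dvd_nat hpA) P.2
        ((hφ.comp_injective P.toSubgroup.subtype_injective).subsingleton_setOf_card_eq P.2)⟩
  infer_instance

theorem exists_mulEquiv_quaternionGroup_prod_zmod (hφ : ActsFixedPointFreely φ)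
    (hnab : ∃ a b : A, a * b ≠ b * a) : ∃ j n : ℕ, 1 ≤ j ∧ Odd n ∧
      Nonempty (A ≃* QuaternionGroup (2 ^ j) × Multiplicative (ZMod n)) := by
  let S : Sylow 2 A := default
  obtain ⟨N, hN, ⟨e⟩⟩ := exists_sylow_prod_mulEquiv S
  have hNodd : Odd (Nat.card N) := by
    rwa [← Nat.not_even_iff_odd, even_iff_two_dvd]
  have hNcyc : IsCyclic N :=
    (hφ.comp_injective N.subtype_injective).isCyclic_of_odd_card hNodd
  have hScyc : ¬ IsCyclic S := fun hS => by
    obtain ⟨a, b, hab⟩ := hnab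
    refine hab (e.symm.injective ?_)
    simpa only [map_mul] using Prod.ext (mul_comm' _ _) (mul_comm' _ _)
  obtain ⟨j, hj, ⟨q⟩⟩ := exists_mulEquiv_quaternionGroup S.2
    ((hφ.comp_injective S.toSubgroup.subtype_injective).subsingleton_setOf_card_eq S.2) hScyc
  exact ⟨j, Nat.card N, hj, hNodd,
    ⟨e.symm.trans (q.prodCongr (zmodCyclicMulEquiv hNcyc).symm)⟩⟩

end ActsFixedPointFreely

/-! ### Counting elements of given order -/

theorem orderCount_congr_s4 {G G' : Type*} [Group G] [Group G'] (e : G ≃* G') (n : ℕ) :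
    orderCount G n = orderCount G' n :=
  Nat.card_congr (e.toEquiv.subtypeEquiv fun g => by
    rw [MulEquiv.toEquiv_eq_coe, MulEquiv.coe_toEquiv, MulEquiv.orderOf_eq])

theorem perfectOrderClasses_congr {G G' : Type*} [Group G] [Group G'] (e : G ≃* G') :
    PerfectOrderClasses G ↔ PerfectOrderClasses G' := by
  simp only [PerfectOrderClasses, orderCount_congr_s4 e, Nat.card_congr e.toEquiv]

theorem perfectOrderClasses_iff_forall_orderOf {G : Type*} [Group G] [Finite G] :
    PerfectOrderClasses G ↔ ∀ g : G, orderCount G (orderOf g) ∣ Nat.card G := by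
  refine ⟨fun h g => (h _ (orderOf_pos g)).resolve_left fun h0 => ?_, fun h n _ => ?_⟩
  · exact (Finite.card_eq_zero_iff.mp h0).false ⟨g, rfl⟩
  · by_cases hn : ∃ g : G, orderOf g = n
    · obtain ⟨g, rfl⟩ := hn
      exact Or.inr (h g)
    · exact Or.inl (Finite.card_eq_zero_iff.mpr ⟨fun g => hn ⟨g, g.2⟩⟩)

section Prod

variable {A B : Type*} [Group A] [Group B]

theorem orderOf_prod_eq_mul (hAB : (Nat.card A).Coprime (Nat.card B)) (g : A × B) :
    orderOf g = orderOf g.1 * orderOf g.2 := by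
  rw [Prod.orderOf, (Nat.Coprime.of_dvd (orderOf_dvd_natCard g.1) (orderOf_dvd_natCard g.2)
    hAB).lcm_eq_mul]

theorem orderOf_prod_eq_mul_iff (hAB : (Nat.card A).Coprime (Nat.card B)) {a b : ℕ}
    (ha : a ∣ Nat.card A) (hb : b ∣ Nat.card B) (g : A × B) :
    orderOf g = a * b ↔ orderOf g.1 = a ∧ orderOf g.2 = b := by
  rw [orderOf_prod_eq_mul hAB]
  refine ⟨fun h => ?_, fun h => by rw [h.1, h.2]⟩
  have h1 := orderOf_dvd_natCard g.1
  have h2 := orderOf_dvd_natCard g.2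
  exact ⟨Nat.dvd_antisymm
      ((Nat.Coprime.of_dvd h1 hb hAB).dvd_of_dvd_mul_right (h ▸ dvd_mul_right _ _))
      ((Nat.Coprime.of_dvd ha h2 hAB).dvd_of_dvd_mul_right (h ▸ dvd_mul_right _ _)),
    Nat.dvd_antisymm
      ((Nat.Coprime.of_dvd ha h2 hAB).symm.dvd_of_dvd_mul_left (h ▸ dvd_mul_left _ _))
      ((Nat.Coprime.of_dvd h1 hb hAB).symm.dvd_of_dvd_mul_left (h ▸ dvd_mul_left _ _))⟩

theorem orderCount_prod (hAB : (Nat.card A).Coprime (Nat.card B)) {a b : ℕ} (ha : a ∣ Nat.card A)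
    (hb : b ∣ Nat.card B) :
    orderCount (A × B) (a * b) = orderCount A a * orderCount B b := by
  simp only [orderCount, orderOf_prod_eq_mul_iff hAB ha hb]
  rw [← Nat.card_prod]
  exact Nat.card_congr (Equiv.subtypeProdEquivProd (p := (orderOf · = a)) (q := (orderOf · = b)))

theorem perfectOrderClasses_prod_iff [Finite A] [Finite B]
    (hAB : (Nat.card A).Coprime (Nat.card B)) :
    PerfectOrderClasses (A × B) ↔ ∀ (x : A) (y : B),
      orderCount A (orderOf x) * orderCount B (orderOf y) ∣ Nat.card A * Nat.card B := by
  simp only [perfectOrderClasses_iff_forall_orderOf, orderOf_prod_eq_mul hAB, Nat.card_prod,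
    orderCount_prod hAB (orderOf_dvd_natCard _) (orderOf_dvd_natCard _), Prod.forall]

end Prod

theorem orderCount_of_isCyclic {G : Type*} [Group G] [Finite G] [IsCyclic G] {d : ℕ}
    (hd : d ∣ Nat.card G) : orderCount G d = d.totient := by
  classical
  have := Fintype.ofFinite G
  rw [Nat.card_eq_fintype_card] at hd
  rw [← IsCyclic.card_orderOf_eq_totient hd, orderCount, Nat.card_eq_fintype_card,
    Fintype.card_subtype]

section QuaternionGroup

variable {m : ℕ}

theorem orderOf_quaternionGroup_dvd (hm : 2 ∣ m) (g : QuaternionGroup m) : orderOf g ∣ 2 * m := by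
  have h := Monoid.order_dvd_exponent g
  rw [QuaternionGroup.exponent] at h
  exact h.trans (mul_dvd_mul_left 2 (lcm_dvd dvd_rfl hm))

/-- The generalised quaternion group is the disjoint union of the cyclic subgroup formed by the
elements `a i` and its coset formed by the elements `xa i`. -/
def quaternionGroupEquivSum (m : ℕ) : QuaternionGroup m ≃ ZMod (2 * m) ⊕ ZMod (2 * m) where
  toFun | .a i => .inl i | .xa i => .inr i
  invFun | .inl i => .a i | .inr i => .xa i
  left_inv := by rintro (i | i) <;> rfl
  right_inv := by rintro (i | i) <;> rfl

variable [NeZero m]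

theorem natCard_quaternionGroup : Nat.card (QuaternionGroup m) = 4 * m := by
  rw [Nat.card_eq_fintype_card, QuaternionGroup.card]

theorem orderOf_quaternionGroup_a (i : ZMod (2 * m)) :
    orderOf (QuaternionGroup.a i : QuaternionGroup m) = addOrderOf i := by
  rw [QuaternionGroup.orderOf_a, ← ZMod.addOrderOf_coe _ (NeZero.ne _), ZMod.natCast_zmod_val]

theorem orderCount_quaternionGroup {d : ℕ} (hd : d ∣ 2 * m) :
    orderCount (QuaternionGroup m) d = d.totient + if d = 4 then 2 * m else 0 := by
  have ha : Nat.card {i : ZMod (2 * m) // addOrderOf i = d} = d.totient := by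
    have hcard : Nat.card (Multiplicative (ZMod (2 * m))) = 2 * m := Nat.card_zmod _
    rw [← orderCount_of_isCyclic (G := Multiplicative (ZMod (2 * m))) (hcard.symm ▸ hd)]
    exact Nat.card_congr (Multiplicative.ofAdd.subtypeEquiv fun i => by
      rw [orderOf_ofAdd_eq_addOrderOf])
  have hxa : Nat.card {_i : ZMod (2 * m) // 4 = d} = if d = 4 then 2 * m else 0 := by
    split_ifs with h
    · simp [h]
    · simp [Ne.symm h]
  rw [← ha, ← hxa, ← Nat.card_sum]
  refine Nat.card_congr (((quaternionGroupEquivSum m).subtypeEquiv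
    (q := Sum.elim (addOrderOf · = d) fun _ => 4 = d) ?_).trans Equiv.subtypeSum)
  rintro (i | i)
  · rw [orderOf_quaternionGroup_a]; rfl
  · rw [QuaternionGroup.orderOf_xa]; rfl

theorem perfectOrderClasses_quaternionGroup_prod_iff_forall_dvd {C : Type*} [Group C] [Finite C]
    [IsCyclic C] (hm : 2 ∣ m) (hC : (4 * m).Coprime (Nat.card C)) :
    PerfectOrderClasses (QuaternionGroup m × C) ↔ ∀ d, d ∣ 2 * m →
      (d.totient + if d = 4 then 2 * m else 0) * (Nat.card C).totient ∣ 4 * m * Nat.card C := by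
  have hord := orderOf_quaternionGroup_dvd hm
  simp only [perfectOrderClasses_prod_iff (natCard_quaternionGroup (m := m).symm ▸ hC),
    orderCount_quaternionGroup (hord _), orderCount_of_isCyclic (orderOf_dvd_natCard _),
    natCard_quaternionGroup]
  refine ⟨fun h d hd => ?_, fun h x y => ?_⟩
  · obtain ⟨y, hy⟩ := IsCyclic.exists_ofOrder_eq_natCard (α := C)
    have hgen : orderOf (.a 1 : QuaternionGroup m) = 2 * m := QuaternionGroup.orderOf_a_one
    have hd' : orderOf ((.a 1 : QuaternionGroup m) ^ (2 * m / d)) = d := by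
      have := orderOf_pow_orderOf_div (orderOf_pos _).ne' (hgen.symm ▸ hd)
      rwa [hgen] at this
    have hdvd := h (.a 1 ^ (2 * m / d)) y
    rwa [hd', hy] at hdvd
  · exact (mul_dvd_mul_left _ (Nat.totient_dvd_of_dvd (orderOf_dvd_natCard y))).trans
      (h _ (hord x))

end QuaternionGroup

theorem forall_totient_add_ite_mul_dvd_iff {j : ℕ} (hj : 1 ≤ j) (t n : ℕ) :
    (∀ d, d ∣ 2 * 2 ^ j → (d.totient + if d = 4 then 2 * 2 ^ j else 0) * t ∣ 4 * 2 ^ j * n) ↔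
      (2 ^ j + 1) * t ∣ 2 ^ (j + 1) * n ∧ t ∣ 4 * n := by
  have hfour : (Nat.totient 4 + 2 * 2 ^ j) * t ∣ 4 * 2 ^ j * n ↔
      (2 ^ j + 1) * t ∣ 2 ^ (j + 1) * n := by
    rw [show (Nat.totient 4 + 2 * 2 ^ j) * t = 2 * ((2 ^ j + 1) * t) by
      rw [show Nat.totient 4 = 2 from rfl]; ring,
      show 4 * 2 ^ j * n = 2 * (2 ^ (j + 1) * n) by ring, Nat.mul_dvd_mul_iff_left two_pos]
  have htot : Nat.totient (2 * 2 ^ j) = 2 ^ j := by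
    rw [← pow_succ', Nat.totient_prime_pow_succ Nat.prime_two, Nat.add_one_sub_one, mul_one]
  have hcomm : 4 * 2 ^ j * n = 2 ^ j * (4 * n) := by ring
  constructor
  · intro h
    have h2j : 2 ∣ 2 ^ j := dvd_pow_self 2 (Nat.one_le_iff_ne_zero.mp hj)
    have h4 := hfour.mp (by simpa only [if_pos] using h 4 (mul_dvd_mul_left 2 h2j))
    refine ⟨h4, ?_⟩
    rcases hj.eq_or_lt with rfl | hj2
    · exact (Dvd.intro_left _ rfl).trans h4
    · have hne : 2 * 2 ^ j ≠ 4 := by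
        have := Nat.pow_le_pow_right two_pos hj2
        omega
      have hmax := h _ dvd_rfl
      rw [if_neg hne, add_zero, htot, hcomm] at hmax
      exact (Nat.mul_dvd_mul_iff_left (pow_pos two_pos j)).mp hmax
  · rintro ⟨h4, ht⟩ d hd
    split_ifs with hd4
    · exact hd4 ▸ hfour.mpr h4
    · rw [add_zero, hcomm]
      exact mul_dvd_mul ((Nat.totient_dvd_of_dvd hd).trans htot.dvd) ht

/-! ### Divisibility by Euler's totient -/

section Totient

variable {j n p q : ℕ}

theorem coprime_two_pow_add_one (hj : 1 ≤ j) (i : ℕ) : (2 ^ j + 1).Coprime (2 ^ i) := by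
  refine Nat.Coprime.pow_right i (Nat.coprime_two_right.mpr ?_)
  exact (even_two.pow_of_ne_zero (Nat.one_le_iff_ne_zero.mp hj)).add_one

theorem mul_totient_dvd_mul_iff (hn : n ≠ 0) (c d : ℕ) :
    c * n.totient ∣ d * n ↔
      c * ∏ p ∈ n.primeFactors, (p - 1) ∣ d * ∏ p ∈ n.primeFactors, p := by
  have hpos : 0 < ∏ p ∈ n.primeFactors, p :=
    Finset.prod_pos fun p hp => (Nat.prime_of_mem_primeFactors hp).pos
  rw [← Nat.mul_dvd_mul_iff_right hpos, mul_assoc, Nat.totient_mul_prod_primeFactors,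
    show c * (n * ∏ p ∈ n.primeFactors, (p - 1)) = n * (c * ∏ p ∈ n.primeFactors, (p - 1)) by ring,
    show d * n * ∏ p ∈ n.primeFactors, p = n * (d * ∏ p ∈ n.primeFactors, p) by ring,
    Nat.mul_dvd_mul_iff_left hn.bot_lt]

theorem card_primeFactors_le_two_of_totient_dvd (hn : Odd n) (h : n.totient ∣ 4 * n) :
    n.primeFactors.card ≤ 2 := by
  have hodd : ∀ p ∈ n.primeFactors, Odd p := fun p hp =>
    hn.of_dvd_nat (Nat.dvd_of_mem_primeFactors hp)
  have h2 : 2 ^ n.primeFactors.card ∣ ∏ p ∈ n.primeFactors, (p - 1) := by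
    rw [← Finset.prod_const]
    exact Finset.prod_dvd_prod_of_dvd _ _ fun p hp => (hodd p hp).tsub_odd odd_one |>.two_dvd
  have hdvd := (mul_totient_dvd_mul_iff hn.pos.ne' 1 4).mp (by rwa [one_mul])
  rw [one_mul] at hdvd
  have hcop : (2 ^ n.primeFactors.card).Coprime (∏ p ∈ n.primeFactors, p) :=
    Nat.Coprime.pow_left _ (Nat.Coprime.prod_right fun p hp => (hodd p hp).coprime_two_left)
  exact (Nat.pow_dvd_pow_iff_le_right one_lt_two).mp
    (hcop.dvd_of_dvd_mul_right (h2.trans hdvd) : _ ∣ 2 ^ 2)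

theorem totient_prime_pow_dvd_iff (hp : p.Prime) (hj : 1 ≤ j) {k : ℕ} (hk : k ≠ 0) :
    (2 ^ j + 1) * (p ^ k).totient ∣ 2 ^ (j + 1) * p ^ k ∧ (p ^ k).totient ∣ 4 * p ^ k ↔
      j = 1 ∧ p = 3 ∨ j = 2 ∧ p = 5 := by
  have hrad (c d : ℕ) := mul_totient_dvd_mul_iff (pow_ne_zero k hp.ne_zero) c d
  simp only [Nat.primeFactors_prime_pow hk hp, Finset.prod_singleton] at hrad
  rw [hrad, ← one_mul (p ^ k).totient, hrad, one_mul]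
  constructor
  · rintro ⟨h1, h2⟩
    have hp4 : p - 1 ∣ 4 :=
      ((Nat.coprime_self_sub_left hp.one_le).mpr (Nat.coprime_one_left p)).dvd_of_dvd_mul_right h2
    have hpj : 2 ^ j + 1 = p := by
      refine ((Nat.dvd_prime hp).mp ?_).resolve_left (by simp)
      exact (coprime_two_pow_add_one hj _).dvd_of_dvd_mul_left ((dvd_mul_right _ _).trans h1)
    subst hpj
    rw [Nat.add_sub_cancel] at hp4
    have : j ≤ 2 := (Nat.pow_dvd_pow_iff_le_right one_lt_two).mp (hp4 : _ ∣ 2 ^ 2)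
    interval_cases j <;> simp
  · rintro (⟨rfl, rfl⟩ | ⟨rfl, rfl⟩) <;> decide

theorem eq_three_and_eq_seven_of_pred_mul_pred_dvd (hp : Odd p) (hq : q.Prime) (hq2 : Odd q)
    (hpq : p < q) (h : (p - 1) * (q - 1) ∣ 4 * (p * q)) : p = 3 ∧ q = 7 := by
  obtain ⟨c, rfl⟩ := hp
  obtain ⟨e, rfl⟩ := hq2
  have hce : c * e ∣ (2 * c + 1) * (2 * e + 1) := by
    refine (Nat.mul_dvd_mul_iff_left (by norm_num : 0 < 4)).mp (dvd_trans (dvd_of_eq ?_) h)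
    simp only [Nat.add_sub_cancel]
    ring
  have hc : c = 1 := by
    have hcop : c.Coprime (2 * c + 1) := by simp
    have hdvd := hcop.dvd_of_dvd_mul_left ((dvd_mul_right c e).trans hce)
    refine ((Nat.dvd_prime hq).mp hdvd).resolve_right ?_
    omega
  subst hc
  have he : e ∣ 3 := by
    have hcop : e.Coprime (2 * e + 1) := by simp
    exact hcop.dvd_of_dvd_mul_right (by simpa using hce)
  rcases (Nat.dvd_prime Nat.prime_three).mp he with rfl | rfl <;> simp_all

theorem card_primeFactors_ne_two (hj : 1 ≤ j) (hn : Odd n)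
    (h1 : (2 ^ j + 1) * n.totient ∣ 2 ^ (j + 1) * n) (h2 : n.totient ∣ 4 * n) :
    n.primeFactors.card ≠ 2 := by
  intro hcard
  obtain ⟨p, q, hpq, hset⟩ : ∃ p q, p < q ∧ n.primeFactors = {p, q} := by
    obtain ⟨p, q, hne, hset⟩ := Finset.card_eq_two.mp hcard
    rcases hne.lt_or_gt with h | h
    · exact ⟨p, q, h, hset⟩
    · exact ⟨q, p, h, hset.trans (Finset.pair_comm p q)⟩
  have hp : p ∈ n.primeFactors := by simp [hset]
  have hq : q ∈ n.primeFactors := by simp [hset]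
  rw [← one_mul n.totient] at h2
  rw [mul_totient_dvd_mul_iff hn.pos.ne', hset, Finset.prod_pair hpq.ne,
    Finset.prod_pair hpq.ne] at h1 h2
  obtain ⟨rfl, rfl⟩ := eq_three_and_eq_seven_of_pred_mul_pred_dvd
    (hn.of_dvd_nat (Nat.dvd_of_mem_primeFactors hp)) (Nat.prime_of_mem_primeFactors hq)
    (hn.of_dvd_nat (Nat.dvd_of_mem_primeFactors hq)) hpq (by rwa [one_mul] at h2)
  have h7 : 2 ^ j + 1 ∣ 7 := by
    have h4 : (2 ^ j + 1) * 4 ∣ 2 ^ (j + 1) * 7 :=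
      (Nat.mul_dvd_mul_iff_right three_pos).mp (by convert h1 using 1 <;> ring)
    exact (coprime_two_pow_add_one hj _).dvd_of_dvd_mul_left ((dvd_mul_right _ _).trans h4)
  have hj2 : j ≤ 2 := by
    have := Nat.le_of_dvd (by norm_num) h7
    exact Nat.lt_succ_iff.mp ((Nat.pow_lt_pow_iff_right one_lt_two).mp (by omega : 2 ^ j < 2 ^ 3))
  interval_cases j <;> revert h7 <;> decide

theorem totient_dvd_iff_exists_pow (hj : 1 ≤ j) (hn : Odd n) :
    (2 ^ j + 1) * n.totient ∣ 2 ^ (j + 1) * n ∧ n.totient ∣ 4 * n ↔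
      ∃ k, 0 < k ∧ (j = 1 ∧ n = 3 ^ k ∨ j = 2 ∧ n = 5 ^ k) := by
  constructor
  · rintro ⟨h1, h2⟩
    have h0 : n.primeFactors.card ≠ 0 := by
      rw [Finset.card_ne_zero, Nat.nonempty_primeFactors]
      refine lt_of_le_of_ne' hn.pos fun hn1 => ?_
      subst hn1
      have := (coprime_two_pow_add_one hj (j + 1)).eq_one_of_dvd (by simpa using h1)
      simp at this
    have hcard : n.primeFactors.card = 1 := by
      have := card_primeFactors_le_two_of_totient_dvd hn h2
      have := card_primeFactors_ne_two hj hn h1 h2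
      omega
    obtain ⟨p, k, hp, hk, rfl⟩ :=
      (isPrimePow_nat_iff n).mp (isPrimePow_iff_card_primeFactors_eq_one.mpr hcard)
    refine ⟨k, hk, ?_⟩
    rcases (totient_prime_pow_dvd_iff hp hj hk.ne').mp ⟨h1, h2⟩ with ⟨rfl, rfl⟩ | ⟨rfl, rfl⟩
    · exact Or.inl ⟨rfl, rfl⟩
    · exact Or.inr ⟨rfl, rfl⟩
  · rintro ⟨k, hk, ⟨rfl, rfl⟩ | ⟨rfl, rfl⟩⟩
    · exact (totient_prime_pow_dvd_iff Nat.prime_three hj hk.ne').mpr (by simp)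
    · exact (totient_prime_pow_dvd_iff Nat.prime_five hj hk.ne').mpr (by simp)

end Totient

theorem perfectOrderClasses_quaternionGroup_prod_iff {j n : ℕ} (hj : 1 ≤ j) (hn : Odd n) :
    PerfectOrderClasses (QuaternionGroup (2 ^ j) × Multiplicative (ZMod n)) ↔
      ∃ k, 0 < k ∧ (j = 1 ∧ n = 3 ^ k ∨ j = 2 ∧ n = 5 ^ k) := by
  have : NeZero n := ⟨hn.pos.ne'⟩
  have hcard : Nat.card (Multiplicative (ZMod n)) = n := Nat.card_zmod n
  have hcop : (4 * 2 ^ j).Coprime n := by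
    rw [show 4 * 2 ^ j = 2 ^ (j + 2) by ring]
    exact hn.coprime_two_left.pow_left _
  rw [perfectOrderClasses_quaternionGroup_prod_iff_forall_dvd
    (dvd_pow_self 2 (Nat.one_le_iff_ne_zero.mp hj)) (hcard.symm ▸ hcop), hcard,
    forall_totient_add_ite_mul_dvd_iff hj, totient_dvd_iff_exists_pow hj hn]

/-- The non-abelian nilpotent Frobenius complements with perfect order classes are exactly
`Q₈ × C_{3^k}` and `Q₁₆ × C_{5^k}`.  (In Mathlib, `QuaternionGroup n` has order `4n`, so
`Q₈ = QuaternionGroup 2` and `Q₁₆ = QuaternionGroup 4`.) -/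
theorem nilpotent_complement_perfectOrderClasses_iff
    {H : Type*} [Group H] [Finite H]
    (hnab : ∃ a b : H, a * b ≠ b * a)
    (hnil : Group.IsNilpotent H)
    (hcompl : ∃ (G : Type) (_ : Group G) (_ : Finite G) (K H' : Subgroup G),
      IsFrobeniusWith K H' ∧ Nonempty (H ≃* H')) :
    PerfectOrderClasses H ↔
      ∃ k : ℕ, 0 < k ∧
        (Nonempty (H ≃* (QuaternionGroup 2 × Multiplicative (ZMod (3 ^ k)))) ∨
          Nonempty (H ≃* (QuaternionGroup 4 × Multiplicative (ZMod (5 ^ k))))) := by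
  obtain ⟨G, _, _, K, H', hF, ⟨f⟩⟩ := hcompl
  have : K.Normal := hF.2.2.1
  have : Nontrivial K := K.nontrivial_iff_ne_bot.mpr hF.1
  constructor
  · intro h
    obtain ⟨j, n, hj, hn, ⟨e⟩⟩ := (hF.actsFixedPointFreely_conjNormal.comp_injective
      (f := f.toMonoidHom) f.injective).exists_mulEquiv_quaternionGroup_prod_zmod hnab
    obtain ⟨k, hk, ⟨rfl, rfl⟩ | ⟨rfl, rfl⟩⟩ :=
      (perfectOrderClasses_quaternionGroup_prod_iff hj hn).mp ((perfectOrderClasses_congr e).mp h)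
    · exact ⟨k, hk, Or.inl ⟨e⟩⟩
    · exact ⟨k, hk, Or.inr ⟨e⟩⟩
  · rintro ⟨k, hk, ⟨⟨e⟩⟩ | ⟨⟨e⟩⟩⟩
    · exact (perfectOrderClasses_congr e).mpr <|
        (perfectOrderClasses_quaternionGroup_prod_iff (j := 1) le_rfl (Odd.pow (by decide))).mpr
          ⟨k, hk, Or.inl ⟨rfl, rfl⟩⟩
    · exact (perfectOrderClasses_congr e).mpr <|
        (perfectOrderClasses_quaternionGroup_prod_iff (j := 2) one_le_two (Odd.pow (by decide))).mpr
          ⟨k, hk, Or.inr ⟨rfl, rfl⟩⟩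
end
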